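/- arXiv:2511.14493 — 2 statements merged into one kernel-verified Lean document; each statement's English description precedes it below -/
import Mathlib

section
/- Let A ⊆ ℝ^d be a nonempty closed set. If A × A ⊆ ℝ^d × ℝ^d is contained in a countable union of smooth hypersurfaces of ℝ^d × ℝ^d ≅ ℝ^{2d}, then there exists an open set U ⊆ ℝ^d with A ∩ U ≠ ∅ such that A ∩ U is contained in a smooth hypersurface of ℝ^d. -/
/-!
The closed set `A × A` is a Baire space covered by countably many hypersurfaces, and each
hypersurface is locally closed. So near some point `(a, b)` the whole of `A × A` lies in the zero
set of one smooth function `F` with nonzero derivative (`exists_local_defining_function`). One of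
the two partial derivatives of `F` at `(a, b)` is nonzero. If it is the first, `x ↦ F (x, b)`
vanishes on `A` near `a`, because `b ∈ A`, and its zero set near `a` is the required hypersurface;
the other case is symmetric (`exists_hypersurface_of_slice`).
-/

open MeasureTheory Metric Filter Set Topology
open scoped ENNReal NNReal Pointwise

noncomputable section

/-- `ℝ^d` with the maximum metric, so that `ball 0 1 = (-1,1)^d`. -/
abbrev Euc (d : ℕ) : Type := Fin d → ℝ

/-- The (lower Hausdorff) dimension of a measure:
`dim μ = inf { dim_H A : A Borel, μ A > 0 }`. -/
def mdim {X : Type*} [EMetricSpace X] [MeasurableSpace X] (μ : Measure X) : ℝ≥0∞ :=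
  ⨅ (A : Set X) (_ : MeasurableSet A) (_ : 0 < μ A), dimH A

/-- The topological support of a measure. -/
def msupport {X : Type*} [TopologicalSpace X] [MeasurableSpace X] (μ : Measure X) : Set X :=
  {x | ∀ U : Set X, IsOpen U → x ∈ U → 0 < μ U}

/-- The matrix of the derivative of `f` at `x`. -/
def Dmat {d : ℕ} (f : Euc d → Euc d) (x : Euc d) : Matrix (Fin d) (Fin d) ℝ :=
  LinearMap.toMatrix' (fderiv ℝ f x : Euc d →ₗ[ℝ] Euc d)

/-- The conformal scaling factor `‖Df(x)‖ = |det Df(x)|^{1/d}` of a conformal map. -/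
def confScale {d : ℕ} (f : Euc d → Euc d) (x : Euc d) : ℝ :=
  |LinearMap.det (fderiv ℝ f x : Euc d →ₗ[ℝ] Euc d)| ^ ((d : ℝ)⁻¹)

/-- The special orthogonal group `SO(d)`, as a set of matrices. -/
def SOset (d : ℕ) : Set (Matrix (Fin d) (Fin d) ℝ) :=
  {O | O ∈ Matrix.orthogonalGroup (Fin d) ℝ ∧ O.det = 1}

/-- The conformal orthogonal group `CO(d) = {rO : r > 0, O ∈ SO(d)}`, as a set of matrices. -/
def COset (d : ℕ) : Set (Matrix (Fin d) (Fin d) ℝ) :=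
  {A | ∃ r : ℝ, 0 < r ∧ ∃ O ∈ SOset d, A = r • O}

/-- `⟨A⟩`: the closure of the set of finite (nonempty) products of elements of `A`. -/
def genClosure {G : Type*} [Monoid G] [TopologicalSpace G] (A : Set G) : Set G :=
  closure {g | ∃ l : List G, l ≠ [] ∧ (∀ x ∈ l, x ∈ A) ∧ l.prod = g}

/-- `f` is a conformal map on `U`: injective on `U`, `closure (f '' U) ⊆ U`, differentiable
with conformal derivative `Df(x) = c • O`, `O` orthogonal, and `Df` Hölder continuous. -/
def IsConformalMapOn (d : ℕ) (f : Euc d → Euc d) (U : Set (Euc d)) : Prop :=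
  Set.InjOn f U ∧ closure (f '' U) ⊆ U ∧ (∀ x ∈ U, DifferentiableAt ℝ f x) ∧
    (∀ x ∈ U, ∃ c : ℝ, 0 < c ∧ ∃ O ∈ Matrix.orthogonalGroup (Fin d) ℝ,
      (fderiv ℝ f x : Euc d →ₗ[ℝ] Euc d) = c • O.mulVecLin) ∧
    (∃ C α : ℝ≥0, 0 < α ∧ HolderOnWith C α (fun x => fderiv ℝ f x) U)

/-- A conformal iterated function system on `(-1,1)^d`: at least two contractive
conformal maps. -/
structure ConformalIFS (d : ℕ) where
  n : ℕ
  two_le : 2 ≤ n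
  funs : Fin n → Euc d → Euc d
  conf : ∀ i, IsConformalMapOn d (funs i) (Metric.ball 0 1)
  contr : ∀ i, ∃ r : ℝ, r < 1 ∧ ∀ x ∈ Metric.ball (0 : Euc d) 1, confScale (funs i) x ≤ r

/-- `μ` is a self-conformal measure associated to `Φ`: a Borel probability measure on
`(-1,1)^d` with `μ = Σ_i p_i • (f_i)_* μ` for a strictly positive probability vector `p`. -/
def IsSelfConformal {d : ℕ} (Φ : ConformalIFS d) (μ : Measure (Euc d)) : Prop :=
  IsProbabilityMeasure μ ∧ μ (Metric.ball (0 : Euc d) 1)ᶜ = 0 ∧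
    ∃ p : Fin Φ.n → ℝ≥0∞, (∀ i, 0 < p i) ∧ (∑ i, p i) = 1 ∧
      μ = ∑ i, p i • μ.map (Φ.funs i)

/-- `K` is the attractor of `Φ`: the unique nonempty compact set with `K = ⋃ i, f_i(K)`. -/
def IsAttractor {d : ℕ} (Φ : ConformalIFS d) (K : Set (Euc d)) : Prop :=
  K.Nonempty ∧ IsCompact K ∧ K ⊆ Metric.ball 0 1 ∧ K = ⋃ i, Φ.funs i '' K

/-- `Φ` is totally non-linear: for every conformal map `g` of `(-1,1)^d` there is `f ∈ Φ`
such that `g ∘ f ∘ g⁻¹` is not (the restriction of) an affine map. -/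
def TotallyNonLinear {d : ℕ} (Φ : ConformalIFS d) : Prop :=
  ∀ g : Euc d → Euc d, IsConformalMapOn d g (Metric.ball 0 1) →
    ∃ i, ¬ ∃ A : Euc d →ᵃ[ℝ] Euc d, ∀ x ∈ Metric.ball (0 : Euc d) 1, g (Φ.funs i x) = A (g x)

/-- All maps of `Φ` are orientation-preserving. -/
def OrientationPreserving {d : ℕ} (Φ : ConformalIFS d) : Prop :=
  ∀ i, ∀ x ∈ Metric.ball (0 : Euc d) 1,
    0 < LinearMap.det (fderiv ℝ (Φ.funs i) x : Euc d →ₗ[ℝ] Euc d)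

instance {X : Type*} [MeasurableSpace X] : MeasurableSpace (ProbabilityMeasure X) :=
  inferInstanceAs (MeasurableSpace {μ : Measure X // IsProbabilityMeasure μ})

section Scenery

variable {X : Type*} [NormedAddCommGroup X] [NormedSpace ℝ X] [MeasurableSpace X] [BorelSpace X]

/-- The rescaled measure `μ_{x,t}`, with `μ_{x,t}(A) = μ(2^{-t}A + x)/μ(B(x,2^{-t}))`,
viewed as a measure on `B(0,1)`. -/
def resc (μ : Measure X) (x : X) (t : ℝ) : Measure X :=
  (μ (closedBall x ((2 : ℝ) ^ (-t))))⁻¹ •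
    ((μ.map (fun y => (2 : ℝ) ^ t • (y - x))).restrict (closedBall (0 : X) 1))

open Classical in
/-- `μ_{x,t}` as a probability measure (junk value if the normalization fails). -/
def rescPM (μ : Measure X) (x : X) (t : ℝ) : ProbabilityMeasure X :=
  if h : IsProbabilityMeasure (resc μ x t) then ⟨resc μ x t, h⟩
  else ⟨Measure.dirac 0, Measure.dirac.isProbabilityMeasure⟩

/-- `P` is a tangent distribution of `μ` at `x`: a weak-* accumulation point, as `T → ∞`,
of the sceneries `⟨μ⟩_{x,T} = (1/T)∫_0^T δ_{μ_{x,t}} dt`. -/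
def IsTangentDistribution (μ : Measure X) (x : X) (P : Measure (ProbabilityMeasure X)) : Prop :=
  IsProbabilityMeasure P ∧
    ∃ T : ℕ → ℝ, (∀ n, 1 ≤ T n) ∧ Tendsto T atTop atTop ∧
      ∀ F : BoundedContinuousFunction (ProbabilityMeasure X) ℝ,
        Tendsto (fun n => (T n)⁻¹ * ∫ t in Set.Ioc (0 : ℝ) (T n), F (rescPM μ x t))
          atTop (𝓝 (∫ η, F η ∂P))

/-- `μ` is tangent-regular: at `μ`-a.e. `x`, every tangent distribution `P` of `μ` at `x`
satisfies `dim η = dim μ` for `P`-a.e. `η`. -/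
def TangentRegular (μ : Measure X) : Prop :=
  ∀ᵐ x ∂μ, ∀ P : Measure (ProbabilityMeasure X), IsTangentDistribution μ x P →
    ∀ᵐ η : ProbabilityMeasure X ∂P, mdim η.toMeasure = mdim μ

/-- The magnification semiflow `S_t : μ ↦ μ_{0,t}` on probability measures. -/
def stMap (t : ℝ) (η : ProbabilityMeasure X) : ProbabilityMeasure X :=
  rescPM η.toMeasure 0 t

/-- `P` is a fractal distribution: an `S_t`-invariant, quasi-Palm probability
distribution on measures. -/
def IsFractalDistribution (P : Measure (ProbabilityMeasure X)) : Prop :=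
  IsProbabilityMeasure P ∧
    (∀ t : ℝ, 0 ≤ t → P.map (stMap t) = P) ∧
    ∀ A : Set (ProbabilityMeasure X), MeasurableSet A → P Aᶜ = 0 →
      ∀ᵐ η : ProbabilityMeasure X ∂P, ∀ᵐ x ∂η.toMeasure, ∀ t : ℝ, 0 ≤ t →
        closedBall x ((2 : ℝ) ^ (-t)) ⊆ closedBall (0 : X) 1 → rescPM η.toMeasure x t ∈ A

/-- `P` is an ergodic fractal distribution. -/
def IsErgodicFD (P : Measure (ProbabilityMeasure X)) : Prop :=
  IsFractalDistribution P ∧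
    ∀ A : Set (ProbabilityMeasure X), MeasurableSet A →
      (∀ t : ℝ, 0 ≤ t → stMap t ⁻¹' A = A) → P A = 0 ∨ P Aᶜ = 0

/-- `μ` is exact-dimensional: the local dimension exists `μ`-a.e. and equals `dim μ`. -/
def ExactDimensional (μ : Measure X) : Prop :=
  ∀ᵐ x ∂μ, Tendsto (fun r : ℝ => Real.log (μ (closedBall x r)).toReal / Real.log r)
    (𝓝[>] (0 : ℝ)) (𝓝 (mdim μ).toReal)

end Scenery

/-- `M` is a `C^k` hypersurface: locally the zero set of a `C^k` real-valued function
with non-vanishing derivative. -/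
def IsCkHypersurface {X : Type*} [NormedAddCommGroup X] [NormedSpace ℝ X]
    (k : ℕ∞) (M : Set X) : Prop :=
  ∀ x ∈ M, ∃ (U : Set X) (F : X → ℝ), IsOpen U ∧ x ∈ U ∧ ContDiffOn ℝ k F U ∧
    (∀ y ∈ U, fderiv ℝ F y ≠ 0) ∧ M ∩ U = {y ∈ U | F y = 0}

/-- An analytic curve: the image of a non-constant real-analytic map defined on an
open interval. -/
def IsAnalyticCurve {d : ℕ} (C : Set (Euc d)) : Prop :=
  ∃ (I : Set ℝ) (γ : ℝ → Euc d), IsOpen I ∧ I.OrdConnected ∧ I.Nonempty ∧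
    AnalyticOnNhd ℝ γ I ∧ (∃ s ∈ I, ∃ t ∈ I, γ s ≠ γ t) ∧ C = γ '' I

/-- An affine hyperplane in `ℝ^d`. -/
def IsAffineHyperplane {d : ℕ} (H : Set (Euc d)) : Prop :=
  ∃ (v : Euc d) (c : ℝ), v ≠ 0 ∧ H = {x : Euc d | (∑ i, v i * x i) = c}

/-- A (d-1)-dimensional (Euclidean) sphere in `ℝ^d`. -/
def IsEucSphere {d : ℕ} (S : Set (Euc d)) : Prop :=
  ∃ (z : Euc d) (r : ℝ), 0 < r ∧ S = {x : Euc d | (∑ i, (x i - z i) ^ 2) = r ^ 2}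

/-- `ν` is `s`-Ahlfors-regular. -/
def IsAhlforsRegular {d : ℕ} (ν : Measure (Euc d)) (s : ℝ) : Prop :=
  ν ≠ 0 ∧ ∃ C : ℝ≥0∞, 1 ≤ C ∧ C ≠ ∞ ∧ ∀ x ∈ msupport ν, ∀ r : ℝ, 0 < r →
    r ≤ Metric.diam (msupport ν) →
      ENNReal.ofReal (r ^ s) / C ≤ ν (closedBall x r) ∧
        ν (closedBall x r) ≤ C * ENNReal.ofReal (r ^ s)

/-- `xf` assigns to each map of `Φ` its fixed point in `(-1,1)^d`. -/
def IsFixedPoints {d : ℕ} (Φ : ConformalIFS d) (xf : Fin Φ.n → Euc d) : Prop :=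
  ∀ i, xf i ∈ Metric.ball (0 : Euc d) 1 ∧ Φ.funs i (xf i) = xf i

/-- `λ(f_i)`: the contraction ratio of `f_i` at its fixed point. -/
def fixLam {d : ℕ} (Φ : ConformalIFS d) (xf : Fin Φ.n → Euc d) (i : Fin Φ.n) : ℝ :=
  confScale (Φ.funs i) (xf i)

/-- `O(f_i)`: the rotation part of `Df_i` at the fixed point of `f_i`. -/
def fixO {d : ℕ} (Φ : ConformalIFS d) (xf : Fin Φ.n → Euc d) (i : Fin Φ.n) :
    Matrix (Fin d) (Fin d) ℝ :=
  (fixLam Φ xf i)⁻¹ • Dmat (Φ.funs i) (xf i)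

/-- `O(Φ) = {O(f), O(f)⁻¹ : f ∈ Φ}`. -/
def OsetOf {d : ℕ} (Φ : ConformalIFS d) (xf : Fin Φ.n → Euc d) :
    Set (Matrix (Fin d) (Fin d) ℝ) :=
  {M | ∃ i, M = fixO Φ xf i ∨ M = (fixO Φ xf i)⁻¹}

/-- `S_t (L, I)`: push a measure on `ℝ^d × ℝ^d` forward by `(u,v) ↦ (Lu, v)` and
magnify by `S_t`. -/
def StLI {d : ℕ} (L : Matrix (Fin d) (Fin d) ℝ) (t : ℝ)
    (η : ProbabilityMeasure (Euc d × Euc d)) : ProbabilityMeasure (Euc d × Euc d) :=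
  rescPM (η.toMeasure.map (fun p => (L.mulVec p.1, p.2))) 0 t

/-- The matrix of `D(h ∘ f ∘ h⁻¹)` at `h z`, computed by the chain rule. -/
def DfhMat {d : ℕ} (h f : Euc d → Euc d) (z : Euc d) : Matrix (Fin d) (Fin d) ℝ :=
  Dmat h (f z) * Dmat f z * (Dmat h z)⁻¹

/-- The space of conformal maps of `(-1,1)^d`, with the topology of uniform convergence. -/
abbrev ConfMaps (d : ℕ) :=
  {g : UniformFun (Euc d) (Euc d) //
    IsConformalMapOn d (UniformFun.toFun g) (Metric.ball 0 1)}

noncomputable instance (d : ℕ) : MeasurableSpace (ConfMaps d) := borel (ConfMaps d)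

end
/-- If `F ∘ i` vanishes on `A` near `a ∈ A` and has nonzero derivative at `a`, its zero set near
`a` is a hypersurface covering a piece of `A`. It is applied to the slices `x ↦ (x, b)` and
`y ↦ (a, y)`. -/
lemma exists_hypersurface_of_slice {E X : Type*} [NormedAddCommGroup E] [NormedSpace ℝ E]
    [NormedAddCommGroup X] [NormedSpace ℝ X] {A : Set E} {O : Set X} {F : X → ℝ} {i : E → X}
    {a : E} (hi : ContDiff ℝ (⊤ : ℕ∞) i) (hO : IsOpen O) (hF : ContDiffOn ℝ (⊤ : ℕ∞) F O)
    (ha : a ∈ A) (haO : i a ∈ O) (hder : fderiv ℝ (F ∘ i) a ≠ 0)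
    (hzero : ∀ x ∈ A, i x ∈ O → F (i x) = 0) :
    ∃ U : Set E, IsOpen U ∧ (A ∩ U).Nonempty ∧
      ∃ M : Set E, IsCkHypersurface (⊤ : ℕ∞) M ∧ A ∩ U ⊆ M := by
  have hO' : IsOpen (i ⁻¹' O) := hO.preimage hi.continuous
  have hg : ContDiffOn ℝ (⊤ : ℕ∞) (F ∘ i) (i ⁻¹' O) :=
    hF.comp hi.contDiffOn (mapsTo_preimage i O)
  have hcont : ContinuousOn (fderiv ℝ (F ∘ i)) (i ⁻¹' O) :=
    hg.continuousOn_fderiv_of_isOpen hO' (by simp)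
  have hV : IsOpen (i ⁻¹' O ∩ fderiv ℝ (F ∘ i) ⁻¹' {0}ᶜ) :=
    hcont.isOpen_inter_preimage hO' isOpen_compl_singleton
  refine ⟨_, hV, ⟨a, ha, haO, hder⟩,
    {x ∈ i ⁻¹' O ∩ fderiv ℝ (F ∘ i) ⁻¹' {0}ᶜ | (F ∘ i) x = 0}, ?_, ?_⟩
  · intro x hx
    exact ⟨_, F ∘ i, hV, hx.1, hg.mono inter_subset_left, fun y hy => hy.2,
      inter_eq_left.2 fun y hy => hy.1⟩
  · exact fun x hx => ⟨hx.2, hzero x hx.1 hx.2.1⟩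

/-- By Baire category, a nonempty closed set covered by countably many hypersurfaces lies, near
one of its points, in the zero set of a single local defining function. -/
lemma exists_local_defining_function {X : Type*} [NormedAddCommGroup X] [NormedSpace ℝ X]
    [CompleteSpace X] {S : Set X} (hS : IsClosed S) (hSne : S.Nonempty) (Ms : ℕ → Set X)
    (hMs : ∀ n, IsCkHypersurface (⊤ : ℕ∞) (Ms n)) (hsub : S ⊆ ⋃ n, Ms n) :
    ∃ (O : Set X) (F : X → ℝ) (p : X), IsOpen O ∧ p ∈ O ∧ p ∈ S ∧
      ContDiffOn ℝ (⊤ : ℕ∞) F O ∧ fderiv ℝ F p ≠ 0 ∧ ∀ q ∈ S, q ∈ O → F q = 0 := by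
  have : CompleteSpace S := hS.completeSpace_coe
  have : Nonempty S := hSne.to_subtype
  -- The `Ms n` need not be closed, so Baire is applied to the closures of their traces on `S`.
  obtain ⟨n, s, hs⟩ := nonempty_interior_of_iUnion_of_closed
    (f := fun n => closure ((↑) ⁻¹' Ms n : Set S)) (fun n => isClosed_closure) (by
      refine eq_univ_of_forall fun x => ?_
      obtain ⟨n, hn⟩ := mem_iUnion.1 (hsub x.2)
      exact mem_iUnion.2 ⟨n, subset_closure hn⟩)
  obtain ⟨p, hpW, hpM⟩ := mem_closure_iff.1 (interior_subset hs) _ isOpen_interior hs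
  obtain ⟨U, F, hU, hpU, hF, hder, hMU⟩ := hMs n p hpM
  obtain ⟨W, hW, hWeq⟩ := isOpen_induced_iff.1
    (isOpen_interior (s := closure ((↑) ⁻¹' Ms n : Set S)))
  rw [← hWeq] at hpW
  refine ⟨W ∩ U, F, p, hW.inter hU, ⟨hpW, hpU⟩, p.2, hF.mono inter_subset_right,
    hder _ hpU, fun q hqS hq => ?_⟩
  have hqcl : (⟨q, hqS⟩ : S) ∈ closure ((↑) ⁻¹' Ms n : Set S) :=
    interior_subset (hWeq ▸ (show (⟨q, hqS⟩ : S) ∈ (↑) ⁻¹' W from hq.1))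
  -- `F` is continuous at `q` and vanishes on `Ms n` near `q`, which lies in the closure of `Ms n`.
  by_contra hne
  have hnear : ∀ᶠ y in 𝓝 q, y ∈ U ∧ F y ≠ 0 :=
    (hU.eventually_mem hq.2).and
      ((hF.continuousOn.continuousAt (hU.mem_nhds hq.2)).eventually_ne hne)
  have hnear' : ∀ᶠ y : S in 𝓝 ⟨q, hqS⟩, (y : X) ∈ U ∧ F y ≠ 0 :=
    (continuous_subtype_val.tendsto (⟨q, hqS⟩ : S)).eventually hnear
  obtain ⟨y, hyM, hyU, hy0⟩ := ((mem_closure_iff_frequently.1 hqcl).and_eventually hnear').exists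
  have hy : (y : X) ∈ {y ∈ U | F y = 0} := hMU ▸ ⟨hyM, hyU⟩
  exact hy0 hy.2

theorem product_in_hypersurfaces_implies_local_hypersurface
    {d : ℕ} (hd : 1 ≤ d) (A : Set (Euc d)) (hA : IsClosed A) (hAne : A.Nonempty)
    (Ms : ℕ → Set (Euc d × Euc d)) (hMs : ∀ n, IsCkHypersurface (⊤ : ℕ∞) (Ms n))
    (hsub : A ×ˢ A ⊆ ⋃ n, Ms n) :
    ∃ U : Set (Euc d), IsOpen U ∧ (A ∩ U).Nonempty ∧
      ∃ M : Set (Euc d), IsCkHypersurface (⊤ : ℕ∞) M ∧ A ∩ U ⊆ M := by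
  obtain ⟨O, F, ⟨a, b⟩, hO, hpO, ⟨ha, hb⟩, hF, hder, hzero⟩ :=
    exists_local_defining_function (hA.prod hA) (hAne.prod hAne) Ms hMs hsub
  have hdiff : DifferentiableAt ℝ F (a, b) :=
    (hF.contDiffAt (hO.mem_nhds hpO)).differentiableAt (by simp)
  by_cases h1 : fderiv ℝ (F ∘ fun x => (x, b)) a = 0
  · refine exists_hypersurface_of_slice (A := A) (i := fun y => (a, y)) (a := b)
      (contDiff_const.prodMk contDiff_id) hO hF hb hpO (fun h2 => hder ?_)
      (fun y hy => hzero (a, y) ⟨ha, hy⟩)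
    -- Both partial derivatives vanish, hence so does the full derivative.
    have e1 := hdiff.hasFDerivAt.comp a (hasFDerivAt_prodMk_left (𝕜 := ℝ) a b)
    have e2 := hdiff.hasFDerivAt.comp b (hasFDerivAt_prodMk_right (𝕜 := ℝ) a b)
    rw [e1.fderiv] at h1
    rw [e2.fderiv] at h2
    exact ContinuousLinearMap.prod_ext (by simpa using h1) (by simpa using h2)
  · exact exists_hypersurface_of_slice (A := A) (i := fun x => (x, b)) (a := a)
      (contDiff_id.prodMk contDiff_const) hO hF ha hpO h1
      (fun x hx => hzero (x, b) ⟨hx, hb⟩)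
end

section
/- Let K ⊆ ℝ^d be a self-conformal set, i.e. the attractor of a conformal iterated function system on ℝ^d. If K × K is contained in a countable union of smooth hypersurfaces of ℝ^d × ℝ^d ≅ ℝ^{2d}, then K is contained in a smooth hypersurface of ℝ^d. -/
/-!
By the Baire category theorem applied to the compact set `K × K`, some relatively open piece
`(K × K) ∩ (A × B)` lies in a regular level set `{F = 0}` inside one chart. One of the two partial
differentials of `F` is nonzero, so restricting `F` to a slice shows that `K` lies in a smooth
regular level set `{G = 0}` near one of its points (`exists_local_hypersurface`). The maps of the
system contract Euclidean distances, so some composition `g` of them carries `K` into that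
neighbourhood (`exists_word`), whence `K ⊆ {G ∘ g = 0}`. Since `Dg` is invertible, this is a smooth
hypersurface as soon as `g` is smooth. In dimension one, the local statement says that `K` has an
isolated point, and then `g` being injective makes `K` a single point.

The remaining ingredient is that `C¹` conformal maps are smooth in dimension at least two.

* In the plane they are locally holomorphic or antiholomorphic (`conf_smooth_two`).
* In dimension at least three this is the regularity part of Liouville's theorem
  (`conf_smooth_of_three_le`). For a vector `e`, the maps `y ↦ f (f⁻¹ y + t e)` are conformal and
  equal the identity at `t = 0`, so their `t`-derivative `w(y) = Df(f⁻¹ y) e` should be a conformal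
  Killing field. As `w` is only continuous, this is shown in the weak sense
  (`weak_conformal_killing`): the difference quotients `v` have conformal Killing defect at most
  `t |Dv|²`, where `t |Dv|` is uniformly small, and an `L²` energy identity (`energy_bound`) bounds
  the Dirichlet energy of the cut-off quotients, so that the defect tends to zero in `L¹`.
  Mollifications of `w` are smooth conformal Killing fields, hence quadratic polynomials, and so is
  `w` (`quadratic_of_weak_killing`). Thus `Df e = w ∘ f` with `w` a polynomial, and smoothness of
  `f` follows by bootstrapping.
-/

open MeasureTheory Metric Filter Set Topology
open scoped ENNReal NNReal Pointwise

/-! ### Partial derivatives and the energy estimate -/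

/-- The `j`-th partial derivative of a scalar function on `ℝ^d`. -/
noncomputable def pd {d : ℕ} (g : Euc d → ℝ) (j : Fin d) (x : Euc d) : ℝ :=
  fderiv ℝ g x (Pi.single j 1)

lemma pd_continuous {d : ℕ} {g : Euc d → ℝ} (hg : ContDiff ℝ 1 g) (j : Fin d) :
    Continuous (pd g j) :=
  (hg.continuous_fderiv one_ne_zero).clm_apply continuous_const

lemma pd_hasCompactSupport {d : ℕ} {g : Euc d → ℝ} (hg : HasCompactSupport g) (j : Fin d) :
    HasCompactSupport (pd g j) :=
  hg.fderiv_apply ℝ (Pi.single j 1)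

lemma pd_eq_zero_of_notMem {d : ℕ} {g : Euc d → ℝ} {x : Euc d} (hx : x ∉ tsupport g)
    (j : Fin d) : pd g j x = 0 := by
  have : fderiv ℝ g x = 0 := by
    by_contra h
    exact hx (support_fderiv_subset ℝ h)
  simp [pd, this]

lemma pd_congr {d : ℕ} {g h : Euc d → ℝ} {x : Euc d} (hx : g =ᶠ[𝓝 x] h)
    (j : Fin d) : pd g j x = pd h j x := by
  simp [pd, hx.fderiv_eq]

lemma pd_mul {d : ℕ} {g h : Euc d → ℝ} {x : Euc d} (hg : DifferentiableAt ℝ g x)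
    (hh : DifferentiableAt ℝ h x) (j : Fin d) :
    pd (fun y => g y * h y) j x = g x * pd h j x + h x * pd g j x := by
  simp [pd, fderiv_fun_mul hg hh]

lemma integral_pd_by_parts {d : ℕ} {a b : Euc d → ℝ} (ha : ContDiff ℝ 1 a)
    (hac : HasCompactSupport a) (hb : ContDiff ℝ 1 b) (j : Fin d) :
    ∫ x, a x * pd b j x = - ∫ x, pd a j x * b x := by
  refine integral_mul_fderiv_eq_neg_fderiv_mul_of_integrable ?_ ?_ ?_ ?_ ?_
  · exact ((pd_continuous ha j).mul hb.continuous).integrable_of_hasCompactSupport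
      ((pd_hasCompactSupport hac j).mul_right)
  · exact (ha.continuous.mul (pd_continuous hb j)).integrable_of_hasCompactSupport
      (hac.mul_right)
  · exact (ha.continuous.mul hb.continuous).integrable_of_hasCompactSupport (hac.mul_right)
  · exact fun x _ => ha.differentiable one_ne_zero x
  · exact fun x _ => hb.differentiable one_ne_zero x

/-- `∫ ∂ᵢa ∂ⱼb = ∫ ∂ⱼa ∂ᵢb` for compactly supported `C¹` functions. Since second derivatives are
not available, `∂ⱼ` is replaced by a difference quotient, which commutes with `∂ᵢ`. -/
lemma integral_pd_mul_pd_comm {d : ℕ} {a b : Euc d → ℝ} (ha : ContDiff ℝ 1 a)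
    (hac : HasCompactSupport a) (hb : ContDiff ℝ 1 b) (hbc : HasCompactSupport b)
    (i j : Fin d) :
    ∫ x, pd a i x * pd b j x = ∫ x, pd a j x * pd b i x := by
  obtain ⟨Ca, hCa⟩ := ha.lipschitzWith_of_hasCompactSupport hac one_ne_zero
  obtain ⟨Cb, hCb⟩ := hb.lipschitzWith_of_hasCompactSupport hbc one_ne_zero
  have hpi := fun {g : Euc d → ℝ} (hg : ContDiff ℝ 1 g) (hgc : HasCompactSupport g) k =>
    (pd_continuous hg k).integrable_of_hasCompactSupport (μ := volume) (pd_hasCompactSupport hgc k)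
  have A := hCa.integral_inv_smul_sub_mul_tendsto_integral_lineDeriv_mul
    (hpi hb hbc i) (Pi.single j 1)
  have B := hCb.integral_inv_smul_sub_mul_tendsto_integral_lineDeriv_mul
    (hpi ha hac i) (-Pi.single j 1)
  have la : ∀ x, lineDeriv ℝ a x (Pi.single j 1) = pd a j x := fun x =>
    (ha.differentiable one_ne_zero x).lineDeriv_eq_fderiv
  have lb : ∀ x, lineDeriv ℝ b x (-Pi.single j 1) = - pd b j x := fun x => by
    rw [(hb.differentiable one_ne_zero x).lineDeriv_eq_fderiv]; simp [pd]
  simp only [la] at A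
  simp only [lb] at B
  have key : ∀ t : ℝ, ∫ x, (t⁻¹ • (a (x + t • Pi.single j 1) - a x)) * pd b i x
      = - ∫ x, (t⁻¹ • (b (x + t • -Pi.single j 1) - b x)) * pd a i x := by
    intro t
    set s : Euc d := t • Pi.single j 1 with hs
    have hs' : t • -(Pi.single j 1 : Euc d) = -s := by simp [hs]
    rw [hs']
    have hat : ContDiff ℝ 1 (fun x => a (x + s)) := ha.comp (contDiff_id.add contDiff_const)
    have hatc : HasCompactSupport (fun x => a (x + s)) :=
      hac.comp_homeomorph (Homeomorph.addRight s)
    have hpt : ∀ x, pd (fun x => a (x + s)) i x = pd a i (x + s) := fun x => by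
      simp [pd, fderiv_comp_add_right]
    have e1 : ∫ x, a (x + s) * pd b i x = - ∫ x, pd a i x * b (x + -s) := by
      rw [integral_pd_by_parts hat hatc hb i]
      congr 1
      rw [← integral_add_right_eq_self _ (-s)]
      simp [hpt]
    have e2 := integral_pd_by_parts ha hac hb i
    have i1 : Integrable (fun x => a (x + s) * pd b i x) :=
      (hat.continuous.mul (pd_continuous hb i)).integrable_of_hasCompactSupport hatc.mul_right
    have i2 : Integrable (fun x => a x * pd b i x) :=
      (ha.continuous.mul (pd_continuous hb i)).integrable_of_hasCompactSupport hac.mul_right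
    have i3 : Integrable (fun x => pd a i x * b (x + -s)) :=
      ((pd_continuous ha i).mul (hb.continuous.comp
        (continuous_add_const _))).integrable_of_hasCompactSupport
          (pd_hasCompactSupport hac i).mul_right
    have i4 : Integrable (fun x => pd a i x * b x) :=
      ((pd_continuous ha i).mul hb.continuous).integrable_of_hasCompactSupport
          (pd_hasCompactSupport hac i).mul_right
    have l : ∫ x, (t⁻¹ • (a (x + s) - a x)) * pd b i x
        = t⁻¹ * ((∫ x, a (x + s) * pd b i x) - ∫ x, a x * pd b i x) := by
      rw [← integral_sub i1 i2, ← integral_const_mul]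
      congr 1; ext x; simp; ring
    have r : ∫ x, (t⁻¹ • (b (x + -s) - b x)) * pd a i x
        = t⁻¹ * ((∫ x, pd a i x * b (x + -s)) - ∫ x, pd a i x * b x) := by
      rw [← integral_sub i3 i4, ← integral_const_mul]
      congr 1; ext x; simp; ring
    rw [l, r, e1, e2]; ring
  simp only [key] at A
  have := tendsto_nhds_unique A B.neg
  rw [this, ← integral_neg]
  congr 1; ext x; ring

/-- The energy identity for the Cauchy–Riemann type operator in the `(i,j)` plane: the defect
`(∂ⱼuᵢ + ∂ᵢuⱼ, ∂ᵢuᵢ - ∂ⱼuⱼ)` controls all four derivatives in `L²`. -/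
lemma integral_pair_energy {d : ℕ} {a b : Euc d → ℝ} (ha : ContDiff ℝ 1 a)
    (hac : HasCompactSupport a) (hb : ContDiff ℝ 1 b) (hbc : HasCompactSupport b)
    (i j : Fin d) :
    ∫ x, ((pd a i x) ^ 2 + (pd a j x) ^ 2 + (pd b i x) ^ 2 + (pd b j x) ^ 2)
      = ∫ x, ((pd a j x + pd b i x) ^ 2 + (pd a i x - pd b j x) ^ 2) := by
  have hpi := fun {g h : Euc d → ℝ} (hg : ContDiff ℝ 1 g) (hgc : HasCompactSupport g)
      (hh : ContDiff ℝ 1 h) k l =>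
    ((pd_continuous hg k).mul (pd_continuous hh l)).integrable_of_hasCompactSupport
      (μ := volume) (pd_hasCompactSupport hgc k).mul_right
  have e := integral_pd_mul_pd_comm ha hac hb hbc i j
  have : ∫ x, ((pd a i x) ^ 2 + (pd a j x) ^ 2 + (pd b i x) ^ 2 + (pd b j x) ^ 2)
      = ∫ x, (((pd a j x + pd b i x) ^ 2 + (pd a i x - pd b j x) ^ 2) +
        (2 * (pd a i x * pd b j x) - 2 * (pd a j x * pd b i x))) := by
    congr 1; ext x; ring
  rw [this, integral_add, integral_sub, integral_const_mul, integral_const_mul, e]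
  · simp
  · exact (hpi ha hac hb i j).const_mul 2
  · exact (hpi ha hac hb j i).const_mul 2
  · have h := ((((hpi ha hac ha j j).add (hpi hb hbc hb i i)).add ((hpi ha hac hb j i).const_mul 2)).add
      (((hpi ha hac ha i i).add (hpi hb hbc hb j j)).sub ((hpi ha hac hb i j).const_mul 2)))
    refine h.congr (Eventually.of_forall fun x => ?_)
    simp; ring
  · exact ((hpi ha hac hb i j).const_mul 2).sub ((hpi ha hac hb j i).const_mul 2)

/-- An approximate conformal Killing field with compact support whose defect is dominated by a
small multiple of its gradient plus a source `m` has Dirichlet energy bounded by `∫ m`. -/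
lemma energy_bound {d : ℕ} (hd : 2 ≤ d) {u : Fin d → Euc d → ℝ} (hu : ∀ k, ContDiff ℝ 1 (u k))
    (huc : ∀ k, HasCompactSupport (u k)) {m : Euc d → ℝ} (hm : Integrable m) {ε : ℝ}
    (hε : (d : ℝ) ^ 2 * ε ≤ 1 / 2)
    (h : ∀ x i j, i ≠ j → (pd (u i) j x + pd (u j) i x) ^ 2 + (pd (u i) i x - pd (u j) j x) ^ 2
      ≤ ε * (∑ k, ∑ l, (pd (u k) l x) ^ 2) + m x) :
    ∫ x, ∑ k, ∑ l, (pd (u k) l x) ^ 2 ≤ 2 * (d : ℝ) ^ 2 * ∫ x, m x := by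
  have h_int : ∀ k l, Integrable (fun x => (pd (u k) l x) ^ 2) := fun k l => by
    have := ((pd_continuous (hu k) l).mul (pd_continuous (hu k) l)).integrable_of_hasCompactSupport
      (μ := volume) (pd_hasCompactSupport (huc k) l).mul_right
    refine this.congr (Eventually.of_forall fun x => ?_)
    simp [sq]
  have hE : Integrable (fun x => ∑ k, ∑ l, (pd (u k) l x) ^ 2) :=
    integrable_finsetSum _ fun k _ => integrable_finsetSum _ fun l _ => h_int k l
  set E := ∫ x, ∑ k, ∑ l, (pd (u k) l x) ^ 2 with hEdef
  have hE0 : 0 ≤ E := integral_nonneg fun x => by positivity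
  have pair : ∀ i j, i ≠ j → ∫ x, ((pd (u i) i x) ^ 2 + (pd (u i) j x) ^ 2 + (pd (u j) i x) ^ 2
      + (pd (u j) j x) ^ 2) ≤ ε * E + ∫ x, m x := by
    intro i j hij
    rw [integral_pair_energy (hu i) (huc i) (hu j) (huc j) i j, hEdef, ← integral_const_mul,
      ← integral_add (hE.const_mul ε) hm]
    refine integral_mono_of_nonneg (Eventually.of_forall fun x => by positivity)
      ((hE.const_mul ε).add hm) (Eventually.of_forall fun x => h x i j hij)
  have single : ∀ k l, ∫ x, (pd (u k) l x) ^ 2 ≤ ε * E + ∫ x, m x := by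
    intro k l
    obtain ⟨j, hj, hjl⟩ : ∃ j, k ≠ j ∧ (l = k ∨ l = j) := by
      by_cases hkl : l = k
      · have : Nontrivial (Fin d) := Fin.nontrivial_iff_two_le.2 hd
        obtain ⟨j, hj⟩ := exists_ne k
        exact ⟨j, hj.symm, Or.inl hkl⟩
      · exact ⟨l, fun h => hkl h.symm, Or.inr rfl⟩
    refine le_trans (integral_mono (h_int k l) (((((h_int k k).add (h_int k j)).add (h_int j k)).add
      (h_int j j))) fun x => ?_) (pair k j hj)
    simp only [Pi.add_apply]
    have h1 := sq_nonneg (pd (u k) k x)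
    have h2 := sq_nonneg (pd (u k) j x)
    have h3 := sq_nonneg (pd (u j) k x)
    have h4 := sq_nonneg (pd (u j) j x)
    rcases hjl with h | h <;> rw [h] <;> linarith
  have hsum : E ≤ (d : ℝ) ^ 2 * (ε * E + ∫ x, m x) := by
    have : E = ∑ k, ∑ l, ∫ x, (pd (u k) l x) ^ 2 := by
      rw [hEdef, integral_finsetSum _ fun k _ => integrable_finsetSum _ fun l _ => h_int k l]
      exact Finset.sum_congr rfl fun k _ => integral_finsetSum _ fun l _ => h_int k l
    rw [this]
    refine (Finset.sum_le_sum fun k _ => Finset.sum_le_sum fun l _ => single k l).trans ?_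
    rw [← this]
    simp
    apply le_of_eq; ring
  nlinarith [mul_le_mul_of_nonneg_right hε hE0]

/-! ### Weak limits of approximate conformal Killing fields -/

/-- If the vector fields `vₙ` are bounded, converge pointwise to `w`, and their conformal Killing
defect is at most `tₙ |Dvₙ|²` with `tₙ → 0` and `tₙ |Dvₙ| → 0` uniformly, then `w` is a conformal
Killing field in the weak sense. The cutoff `η` makes everything globally defined. -/
theorem weak_conformal_killing {d : ℕ} (hd : 2 ≤ d) {y0 : Euc d} {R : ℝ} {η : Euc d → ℝ}
    (hη : ContDiff ℝ 1 η) (hηs : tsupport η ⊆ ball y0 R) (hηc : HasCompactSupport η)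
    {t : ℕ → ℝ} (ht : Tendsto t atTop (𝓝 0)) (ht0 : ∀ n, 0 ≤ t n)
    {v : ℕ → Fin d → Euc d → ℝ} (hv : ∀ n k, ContDiffOn ℝ 1 (v n k) (ball y0 R))
    {C : ℝ} (hvC : ∀ n k, ∀ x ∈ ball y0 R, |v n k x| ≤ C)
    (hA : ∀ n, ∀ x ∈ ball y0 R, ∀ i j, i ≠ j →
      |pd (v n i) j x + pd (v n j) i x| ≤ t n * ∑ k, ∑ l, (pd (v n k) l x) ^ 2 ∧
      |pd (v n i) i x - pd (v n j) j x| ≤ t n * ∑ k, ∑ l, (pd (v n k) l x) ^ 2)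
    (hε : ∀ ε > 0, ∀ᶠ n in atTop, ∀ x ∈ ball y0 R,
      (t n) ^ 2 * ∑ k, ∑ l, (pd (v n k) l x) ^ 2 ≤ ε)
    {w : Fin d → Euc d → ℝ}
    (hw : ∀ x ∈ ball y0 R, ∀ k, Tendsto (fun n => v n k x) atTop (𝓝 (w k x)))
    {φ : Euc d → ℝ} (hφ : ContDiff ℝ 1 φ) (hφc : HasCompactSupport φ)
    (hφη : ∀ x ∈ tsupport φ, η =ᶠ[𝓝 x] fun _ => 1) {i j : Fin d} (hij : i ≠ j) :
    ∫ x, ((η x * w i x) * pd φ j x + (η x * w j x) * pd φ i x) = 0 ∧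
    ∫ x, ((η x * w i x) * pd φ i x - (η x * w j x) * pd φ j x) = 0 := by
  set u : ℕ → Fin d → Euc d → ℝ := fun n k x => η x * v n k x with hu_def
  have hdiff : ∀ n k, ∀ x ∈ ball y0 R, DifferentiableAt ℝ (v n k) x := fun n k x hx =>
    ((hv n k).contDiffAt (isOpen_ball.mem_nhds hx)).differentiableAt one_ne_zero
  have hus : ∀ n k, tsupport (u n k) ⊆ tsupport η := fun n k => tsupport_mul_subset_left
  have hu : ∀ n k, ContDiff ℝ 1 (u n k) := fun n k => by
    refine contDiff_iff_contDiffAt.2 fun x => ?_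
    by_cases hx : x ∈ tsupport (u n k)
    · exact hη.contDiffAt.mul ((hv n k).contDiffAt (isOpen_ball.mem_nhds (hηs (hus n k hx))))
    · exact contDiffAt_const.congr_of_eventuallyEq (notMem_tsupport_iff_eventuallyEq.1 hx)
  have huc : ∀ n k, HasCompactSupport (u n k) := fun n k => hηc.mul_right
  have hpu : ∀ n k l, ∀ x ∈ ball y0 R,
      pd (u n k) l x = η x * pd (v n k) l x + v n k x * pd η l x := fun n k l x hx =>
    pd_mul (hη.differentiable one_ne_zero x) (hdiff n k x hx) l
  have hpu0 : ∀ n k l x, x ∉ tsupport η → pd (u n k) l x = 0 := fun n k l x hx =>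
    pd_eq_zero_of_notMem (fun h => hx (hus n k h)) l
  -- a bound for `v ⊗ ∇η`, uniform in `n`
  obtain ⟨C1, hC1⟩ : ∃ C1, ∀ l x, |pd η l x| ≤ C1 := by
    have : ∀ l, ∃ c, ∀ x, |pd η l x| ≤ c := fun l =>
      (pd_continuous hη l).bounded_above_of_compact_support (pd_hasCompactSupport hηc l)
    choose c hc using this
    refine ⟨∑ l, |c l|, fun l x => (hc l x).trans ((le_abs_self _).trans ?_)⟩
    exact Finset.single_le_sum (f := fun l => |c l|) (fun _ _ => abs_nonneg _) (Finset.mem_univ l)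
  set M := C * C1 with hM
  have hMb : ∀ n k l, ∀ x ∈ ball y0 R, |v n k x * pd η l x| ≤ M := fun n k l x hx => by
    rw [abs_mul]
    exact mul_le_mul (hvC n k x hx) (hC1 l x) (abs_nonneg _) ((abs_nonneg _).trans (hvC n k x hx))
  have hd0 : (0 : ℝ) < (d : ℝ) ^ 2 := by
    have : 0 < d := by omega
    positivity
  set ε : ℝ := 1 / (16 * (d : ℝ) ^ 2) with hεdef
  have hεpos : 0 < ε := by positivity
  set m : Euc d → ℝ := (ball y0 R).indicator
    (fun _ => (8 * ε * (d : ℝ) ^ 2 + 16) * M ^ 2) with hm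
  have hmint : Integrable m := by
    refine (integrable_indicator_iff measurableSet_ball).2 ?_
    exact integrableOn_const (measure_ball_lt_top.ne)
  have hEn : ∀ᶠ n in atTop, ∫ x, ∑ k, ∑ l, (pd (u n k) l x) ^ 2
      ≤ 2 * (d : ℝ) ^ 2 * ∫ x, m x := by
    filter_upwards [hε ε hεpos] with n hn
    refine energy_bound hd (hu n) (huc n) hmint (ε := 8 * ε) ?_ ?_
    · rw [hεdef]; field_simp; norm_num
    · intro x i j hij
      by_cases hx : x ∈ ball y0 R
      · have hmx : m x = (8 * ε * (d : ℝ) ^ 2 + 16) * M ^ 2 := by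
          simp only [hm]; exact Set.indicator_of_mem hx _
        rw [hmx]
        set N := ∑ k, ∑ l, (pd (v n k) l x) ^ 2 with hN
        set S := ∑ k, ∑ l, (pd (u n k) l x) ^ 2 with hS
        have hN0 : 0 ≤ N := by positivity
        have hηN : (η x) ^ 2 * N ≤ 2 * S + 2 * (d : ℝ) ^ 2 * M ^ 2 := by
          have : ∀ k l, (η x) ^ 2 * (pd (v n k) l x) ^ 2 ≤ 2 * (pd (u n k) l x) ^ 2 + 2 * M ^ 2 := by
            intro k l
            have h1 := hpu n k l x hx
            have h2 : (v n k x * pd η l x) ^ 2 ≤ M ^ 2 := sq_le_sq.2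
              ((hMb n k l x hx).trans (le_abs_self _))
            have h3 : η x * pd (v n k) l x = pd (u n k) l x - v n k x * pd η l x := by
              rw [h1]; ring
            rw [← mul_pow, h3]
            nlinarith [sq_nonneg (pd (u n k) l x + v n k x * pd η l x)]
          rw [hN, Finset.mul_sum]
          simp_rw [Finset.mul_sum]
          refine (Finset.sum_le_sum fun k _ => Finset.sum_le_sum fun l _ => this k l).trans ?_
          simp only [Finset.sum_add_distrib, ← Finset.mul_sum]
          simp
          apply le_of_eq; ring
        have hNε : (η x) ^ 2 * (t n * N) ^ 2 ≤ ε * ((η x) ^ 2 * N) := by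
          have := mul_le_mul_of_nonneg_right (hn x hx) (mul_nonneg (sq_nonneg (η x)) hN0)
          calc _ = ((t n) ^ 2 * N) * ((η x) ^ 2 * N) := by ring
            _ ≤ _ := this
        have comb : ∀ p q r : ℝ, |p| ≤ t n * N → |q| ≤ M → |r| ≤ M →
            (η x * p + q + r) ^ 2 ≤ 2 * (ε * ((η x) ^ 2 * N)) + 8 * M ^ 2 := by
          intro p q r hp hq hr
          have h1 : p ^ 2 ≤ (t n * N) ^ 2 := sq_le_sq.2 (hp.trans (le_abs_self _))
          have h2 : q ^ 2 ≤ M ^ 2 := sq_le_sq.2 (hq.trans (le_abs_self _))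
          have h3 : r ^ 2 ≤ M ^ 2 := sq_le_sq.2 (hr.trans (le_abs_self _))
          have h4 : (η x) ^ 2 * p ^ 2 ≤ (η x) ^ 2 * (t n * N) ^ 2 :=
            mul_le_mul_of_nonneg_left h1 (sq_nonneg _)
          nlinarith [sq_nonneg (η x * p - (q + r)), sq_nonneg (q - r)]
        obtain ⟨a1, a2⟩ := hA n x hx i j hij
        have b1 := comb _ _ _ a1 (hMb n i j x hx) (hMb n j i x hx)
        have b2 := comb _ _ (-(v n j x * pd η j x)) a2 (hMb n i i x hx)
          (by rw [abs_neg]; exact hMb n j j x hx)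
        have c1 : pd (u n i) j x + pd (u n j) i x = η x * (pd (v n i) j x + pd (v n j) i x)
            + v n i x * pd η j x + v n j x * pd η i x := by
          rw [hpu n i j x hx, hpu n j i x hx]; ring
        have c2 : pd (u n i) i x - pd (u n j) j x = η x * (pd (v n i) i x - pd (v n j) j x)
            + v n i x * pd η i x + -(v n j x * pd η j x) := by
          rw [hpu n i i x hx, hpu n j j x hx]; ring
        rw [c1, c2]
        nlinarith [mul_le_mul_of_nonneg_left hηN hεpos.le]
      · have hx' : x ∉ tsupport η := fun h => hx (hηs h)
        have hmx : m x = 0 := by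
          simp only [hm]; exact Set.indicator_of_notMem hx _
        simp [hpu0 _ _ _ x hx', hmx]
  obtain ⟨Cφ, hCφ⟩ : ∃ c, ∀ x, |φ x| ≤ c :=
    hφ.continuous.bounded_above_of_compact_support hφc
  have hCφ0 : 0 ≤ Cφ := (abs_nonneg _).trans (hCφ y0)
  have h_int : ∀ n k l, Integrable (fun x => (pd (u n k) l x) ^ 2) := fun n k l => by
    have := ((pd_continuous (hu n k) l).mul
      (pd_continuous (hu n k) l)).integrable_of_hasCompactSupport
      (μ := volume) (pd_hasCompactSupport (huc n k) l).mul_right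
    refine this.congr (Eventually.of_forall fun x => ?_)
    simp [sq]
  have hEint : ∀ n, Integrable (fun x => ∑ k, ∑ l, (pd (u n k) l x) ^ 2) := fun n =>
    integrable_finsetSum _ fun k _ => integrable_finsetSum _ fun l _ => h_int n k l
  -- both identities are instances of the following passage to the limit
  have key : ∀ (p q r s : Fin d) (σ : ℝ),
      (∀ n, ∀ x ∈ ball y0 R, |pd (v n p) q x + σ * pd (v n r) s x|
        ≤ t n * ∑ k, ∑ l, (pd (v n k) l x) ^ 2) →
      ∫ x, ((η x * w p x) * pd φ q x + σ * ((η x * w r x) * pd φ s x)) = 0 := by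
    intro p q r s σ h
    have ip : ∀ n k l, Integrable (fun x => u n k x * pd φ l x) := fun n k l =>
      ((hu n k).continuous.mul (pd_continuous hφ l)).integrable_of_hasCompactSupport
        (huc n k).mul_right
    have ip' : ∀ n k l, Integrable (fun x => pd (u n k) l x * φ x) := fun n k l =>
      ((pd_continuous (hu n k) l).mul hφ.continuous).integrable_of_hasCompactSupport
        (pd_hasCompactSupport (huc n k) l).mul_right
    have L1 : Tendsto (fun n => ∫ x, (u n p x * pd φ q x + σ * (u n r x * pd φ s x))) atTop
        (𝓝 (∫ x, ((η x * w p x) * pd φ q x + σ * ((η x * w r x) * pd φ s x)))) := by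
      refine tendsto_integral_of_dominated_convergence
        (fun x => (|η x| * C) * |pd φ q x| + |σ| * ((|η x| * C) * |pd φ s x|)) ?_ ?_ ?_ ?_
      · exact fun n => ((ip n p q).add ((ip n r s).const_mul σ)).aestronglyMeasurable
      · have : ∀ l, Integrable (fun x => (|η x| * C) * |pd φ l x|) := fun l => by
          refine Continuous.integrable_of_hasCompactSupport
            ((hη.continuous.abs.mul continuous_const).mul (pd_continuous hφ l).abs) ?_
          exact HasCompactSupport.mul_right (HasCompactSupport.mul_right
            (hηc.comp_left (g := fun y : ℝ => |y|) abs_zero))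
        exact (this q).add ((this s).const_mul _)
      · intro n
        refine Eventually.of_forall fun x => ?_
        have hb : ∀ k, |u n k x| ≤ |η x| * C := fun k => by
          by_cases hx : x ∈ ball y0 R
          · rw [hu_def]; simp only [abs_mul]
            exact mul_le_mul_of_nonneg_left (hvC n k x hx) (abs_nonneg _)
          · have : η x = 0 := image_eq_zero_of_notMem_tsupport (fun h => hx (hηs h))
            simp [hu_def, this]
        rw [Real.norm_eq_abs]
        refine (abs_add_le _ _).trans ?_
        rw [abs_mul (u n p x), abs_mul σ, abs_mul (u n r x)]
        exact add_le_add (mul_le_mul_of_nonneg_right (hb p) (abs_nonneg _))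
          (mul_le_mul_of_nonneg_left (mul_le_mul_of_nonneg_right (hb r) (abs_nonneg _))
            (abs_nonneg _))
      · refine Eventually.of_forall fun x => ?_
        have hb : ∀ k, Tendsto (fun n => u n k x) atTop (𝓝 (η x * w k x)) := fun k => by
          by_cases hx : x ∈ ball y0 R
          · exact (hw x hx k).const_mul _
          · have : η x = 0 := image_eq_zero_of_notMem_tsupport (fun h => hx (hηs h))
            simp [hu_def, this]
        exact ((hb p).mul_const _).add (((hb r).mul_const _).const_mul _)
    have L2 : Tendsto (fun n => ∫ x, (u n p x * pd φ q x + σ * (u n r x * pd φ s x))) atTop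
        (𝓝 0) := by
      have hz : Tendsto (fun n => t n * (Cφ * (2 * (d : ℝ) ^ 2 * ∫ x, m x))) atTop (𝓝 0) := by
        simpa using ht.mul_const _
      refine squeeze_zero_norm' ?_ hz
      filter_upwards [hEn] with n hn
      have e : ∫ x, (u n p x * pd φ q x + σ * (u n r x * pd φ s x))
          = - ∫ x, (pd (u n p) q x * φ x + σ * (pd (u n r) s x * φ x)) := by
        rw [integral_add (ip n p q) ((ip n r s).const_mul σ), integral_const_mul,
          integral_add (ip' n p q) ((ip' n r s).const_mul σ), integral_const_mul,
          integral_pd_by_parts (hu n p) (huc n p) hφ q,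
          integral_pd_by_parts (hu n r) (huc n r) hφ s]
        ring
      rw [e, norm_neg]
      calc _ ≤ ∫ x, (t n * Cφ) * ∑ k, ∑ l, (pd (u n k) l x) ^ 2 := by
            refine norm_integral_le_of_norm_le ((hEint n).const_mul _)
              (Eventually.of_forall fun x => ?_)
            by_cases hx : x ∈ tsupport φ
            · have hη1 := hφη x hx
              have hxη : x ∈ tsupport η := subset_tsupport _ (by
                simp [hη1.eq_of_nhds])
              have hpe : ∀ k l, pd (u n k) l x = pd (v n k) l x := fun k l =>
                pd_congr (by filter_upwards [hη1] with y hy; simp [hu_def, hy]) l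
              simp only [hpe]
              have := h n x (hηs hxη)
              rw [show pd (v n p) q x * φ x + σ * (pd (v n r) s x * φ x)
                = (pd (v n p) q x + σ * pd (v n r) s x) * φ x by ring, Real.norm_eq_abs, abs_mul]
              refine (mul_le_mul this (hCφ x) (abs_nonneg _) ((abs_nonneg _).trans this)).trans ?_
              apply le_of_eq; ring
            · have : φ x = 0 := image_eq_zero_of_notMem_tsupport hx
              simp only [this, mul_zero, add_zero, norm_zero]
              exact mul_nonneg (mul_nonneg (ht0 n) hCφ0) (by positivity)
        _ = t n * (Cφ * ∫ x, ∑ k, ∑ l, (pd (u n k) l x) ^ 2) := by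
            rw [integral_const_mul]; ring
        _ ≤ _ := by
            have := ht0 n
            gcongr
    exact tendsto_nhds_unique L1 L2
  constructor
  · have := key i j j i 1 (fun n x hx => by simpa using (hA n x hx i j hij).1)
    simpa using this
  · have := key i i j j (-1) (fun n x hx => by
      simpa [← sub_eq_add_neg] using (hA n x hx i j hij).2)
    simpa [← sub_eq_add_neg] using this

/-! ### Conformal Killing fields are quadratic -/

/-- The algebra behind the vanishing of third derivatives of a conformal Killing field in dimension
at least three: `T i j k l` stands for `∂ⱼ∂ₖ∂ₗ Wᵢ`. -/
lemma tensor_eq_zero {d : ℕ} (hd : 3 ≤ d) (T : Fin d → Fin d → Fin d → Fin d → ℝ)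
    (h1 : ∀ i j k l, T i j k l = T i k j l) (h2 : ∀ i j k l, T i j k l = T i j l k)
    (h3 : ∀ i j k l, i ≠ j → T i j k l = - T j i k l)
    (h4 : ∀ i j k l, i ≠ j → T i i k l = T j j k l) (i j k l : Fin d) : T i j k l = 0 := by
  have ex : ∀ a b : Fin d, ∃ c, c ≠ a ∧ c ≠ b := by
    intro a b
    obtain ⟨c, hc⟩ := Finset.exists_mem_notMem_of_card_lt_card
      (s := {a, b}) (t := (Finset.univ : Finset (Fin d)))
      (lt_of_le_of_lt Finset.card_le_two (by rw [Finset.card_univ, Fintype.card_fin]; omega))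
    exact ⟨c, by simpa [not_or] using hc⟩
  have h4' : ∀ i j k l, T i i k l = T j j k l := by
    intro i j k l
    by_cases h : i = j
    · rw [h]
    · exact h4 i j k l h
  -- three distinct indices: the cyclic permutations give `T = -T`
  have hdist : ∀ i j k l, i ≠ j → j ≠ k → i ≠ k → T i j k l = 0 := by
    intro i j k l hij hjk hik
    have a1 := h3 i j k l hij
    have a2 := h1 j i k l
    have a3 := h3 j k i l hjk
    have a4 := h1 k j i l
    have a5 := h3 k i j l hik.symm
    have a6 := h1 i k j l
    linarith
  have hoff : ∀ i k l, k ≠ l → T i i k l = 0 := by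
    intro i k l hkl
    obtain ⟨m, hmk, hml⟩ := ex k l
    rw [h4' i m k l, ← hdist m k l m hmk hkl hml, h1, h2]
  -- `∂ᵢWᵢ` is independent of `i`, so `T i i k k = -T k k i i` says that the Hessian of the common
  -- divergence has opposite diagonal entries for any two indices, hence a zero diagonal
  have hsq : ∀ i k, i ≠ k → T i i k k = - T k k i i := by
    intro i k hik
    have e1 : T i i k k = T i k i k := h1 _ _ _ _
    have e2 := h3 i k i k hik
    have e3 : T k i i k = T k k i i := by rw [h2, h1]
    rw [e1, e2, e3]
  have hdiag : ∀ i k, T i i k k = 0 := by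
    intro i k
    obtain ⟨a, hak, -⟩ := ex k k
    obtain ⟨b, hbk, hba⟩ := ex k a
    have e1 := hsq a k hak
    have e2 := hsq b k hbk
    have e3 := hsq a b hba.symm
    have e4 := h4' a k b b
    have e5 := h4' b k a a
    have e6 := h4' a b k k
    have e7 := h4' i a k k
    linarith
  have hii : ∀ i k l, T i i k l = 0 := by
    intro i k l
    by_cases h : k = l
    · rw [h]; exact hdiag i l
    · exact hoff i k l h
  by_cases hij : i = j
  · rw [hij]; exact hii j k l
  by_cases hik : i = k
  · rw [hik, h1]; exact hii k j l
  by_cases hjk : j = k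
  · rw [h3 i j k l hij, hjk, h1, hii, neg_zero]
  · exact hdist i j k l hij hjk hik

lemma pd_contDiff {d : ℕ} {g : Euc d → ℝ} (hg : ContDiff ℝ (⊤ : ℕ∞) g) (j : Fin d) :
    ContDiff ℝ (⊤ : ℕ∞) (pd g j) :=
  (hg.fderiv_right (m := (⊤ : ℕ∞)) le_rfl).clm_apply contDiff_const

lemma pd_pd_comm {d : ℕ} {g : Euc d → ℝ} (hg : ContDiff ℝ (⊤ : ℕ∞) g) (j k : Fin d) (x : Euc d) :
    pd (pd g j) k x = pd (pd g k) j x := by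
  have hs : IsSymmSndFDerivAt ℝ g x :=
    hg.contDiffAt.isSymmSndFDerivAt (by simp [minSmoothness_of_isRCLikeNormedField]; exact WithTop.coe_le_coe.2 le_top)
  have hd : DifferentiableAt ℝ (fderiv ℝ g) x :=
    ((hg.fderiv_right (m := (⊤ : ℕ∞)) le_rfl).differentiable (by simp)) x
  have e : ∀ a b : Fin d, pd (pd g a) b x
      = fderiv ℝ (fderiv ℝ g) x (Pi.single b 1) (Pi.single a 1) := by
    intro a b
    unfold pd
    rw [fderiv_clm_apply hd (differentiableAt_const _)]
    simp
  rw [e, e]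
  exact hs _ _

lemma pd_eqOn {d : ℕ} {g h : Euc d → ℝ} {B : Set (Euc d)} (hB : IsOpen B) (H : EqOn g h B)
    (j : Fin d) : EqOn (pd g j) (pd h j) B := fun _ hx =>
  pd_congr (H.eventuallyEq_of_mem (hB.mem_nhds hx)) j

lemma pd_neg {d : ℕ} (g : Euc d → ℝ) (j : Fin d) : pd (fun y => - g y) j = fun y => - pd g j y := by
  ext x; simp [pd, fderiv_fun_neg]

/-- A function with zero partial derivatives on a ball is constant there. -/
lemma const_of_pd_zero {d : ℕ} {g : Euc d → ℝ} (hg : ContDiff ℝ (⊤ : ℕ∞) g) {y0 : Euc d} {R : ℝ}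
    (h : ∀ j, ∀ x ∈ ball y0 R, pd g j x = 0) : ∀ x ∈ ball y0 R, g x = g y0 := by
  intro x hx
  have hR : 0 < R := dist_nonneg.trans_lt (mem_ball.1 hx)
  refine isOpen_ball.is_const_of_fderiv_eq_zero (convex_ball y0 R).isPreconnected
    (hg.differentiable (by simp)).differentiableOn ?_ hx (mem_ball_self hR)
  intro y hy
  ext v
  simp only [Pi.zero_apply, zero_apply]
  have hv : v = ∑ j, v j • (Pi.single j (1:ℝ) : Euc d) := by
    ext k; simp [Finset.sum_apply, Pi.single_apply]
  rw [hv, map_sum]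
  refine Finset.sum_eq_zero fun j _ => ?_
  rw [map_smul]
  have := h j y hy
  simp only [pd] at this
  rw [this, smul_zero]

/-- The quadratic polynomial with constant term `p.1`, linear part `p.2.1` and quadratic part
`p.2.2`, restricted to a set `B`; linear in the coefficients. -/
noncomputable def quadMap (d : ℕ) (B : Set (Euc d)) :
    (ℝ × (Fin d → ℝ) × (Fin d → Fin d → ℝ)) →ₗ[ℝ] (B → ℝ) where
  toFun p := fun x => p.1 + ∑ k, p.2.1 k * x.1 k + ∑ k, ∑ l, p.2.2 k l * (x.1 k * x.1 l)
  map_add' p q := by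
    ext x
    simp only [Prod.fst_add, Prod.snd_add, Pi.add_apply, add_mul, Finset.sum_add_distrib]
    ring
  map_smul' c p := by
    ext x
    simp only [Prod.smul_fst, Prod.smul_snd, Pi.smul_apply, smul_eq_mul, RingHom.id_apply, mul_add,
      Finset.mul_sum, mul_assoc]

lemma pd_linear {d : ℕ} (b : Fin d → ℝ) (j : Fin d) (x : Euc d) :
    pd (fun y => ∑ k, b k * y k) j x = b j := by
  have : HasFDerivAt (fun y : Euc d => ∑ k, b k * y k)
      (∑ k, b k • (ContinuousLinearMap.proj k : Euc d →L[ℝ] ℝ)) x := by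
    apply HasFDerivAt.fun_sum
    intro k _
    exact (hasFDerivAt_apply k x).const_mul (b k)
  simp [pd, this.fderiv, Pi.single_apply]

lemma pd_quad {d : ℕ} (A : Fin d → Fin d → ℝ) (j : Fin d) (x : Euc d) :
    pd (fun y => ∑ k, ∑ l, A k l * (y k * y l)) j x = ∑ k, (A j k + A k j) * x k := by
  have : HasFDerivAt (fun y : Euc d => ∑ k, ∑ l, A k l * (y k * y l))
      (∑ k, ∑ l, A k l • (x k • (ContinuousLinearMap.proj l : Euc d →L[ℝ] ℝ)
        + x l • (ContinuousLinearMap.proj k : Euc d →L[ℝ] ℝ))) x := by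
    apply HasFDerivAt.fun_sum
    intro k _
    apply HasFDerivAt.fun_sum
    intro l _
    exact ((hasFDerivAt_apply k x).mul (hasFDerivAt_apply l x)).const_mul (A k l)
  simp only [pd, this.fderiv]
  simp [Pi.single_apply, add_mul, Finset.sum_add_distrib]
  rw [add_comm]

/-- Vanishing third derivatives on a ball force a quadratic polynomial. -/
lemma quadratic_of_third_zero {d : ℕ} {g : Euc d → ℝ} (hg : ContDiff ℝ (⊤ : ℕ∞) g) {y0 : Euc d}
    {R : ℝ} (h : ∀ j k l, ∀ x ∈ ball y0 R, pd (pd (pd g j) k) l x = 0) :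
    (fun x : ball y0 R => g x.1) ∈ LinearMap.range (quadMap d (ball y0 R)) := by
  set A : Fin d → Fin d → ℝ := fun j k => pd (pd g j) k y0 with hA
  have hA1 : ∀ j k, ∀ x ∈ ball y0 R, pd (pd g j) k x = A j k := fun j k =>
    const_of_pd_zero (pd_contDiff (pd_contDiff hg j) k) (h j k)
  have hAs : ∀ j k, A j k = A k j := fun j k => pd_pd_comm hg j k y0
  have hlin : ∀ b : Fin d → ℝ, ContDiff ℝ (⊤ : ℕ∞) (fun y : Euc d => ∑ k, b k * y k) := by
    intro b; fun_prop
  have hquad : ∀ A : Fin d → Fin d → ℝ,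
      ContDiff ℝ (⊤ : ℕ∞) (fun y : Euc d => ∑ k, ∑ l, A k l * (y k * y l)) := by
    intro b; fun_prop
  have hpsub : ∀ {a b : Euc d → ℝ}, ContDiff ℝ (⊤ : ℕ∞) a → ContDiff ℝ (⊤ : ℕ∞) b → ∀ j x,
      pd (fun y => a y - b y) j x = pd a j x - pd b j x := by
    intro a b ha hb j x
    simp [pd, fderiv_fun_sub (ha.differentiable (by simp) x) (hb.differentiable (by simp) x)]
  set b : Fin d → ℝ := fun j => pd g j y0 - ∑ k, A j k * y0 k with hb
  have hB1 : ∀ j, ∀ x ∈ ball y0 R, pd g j x - ∑ k, A j k * x k = b j := by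
    intro j
    refine const_of_pd_zero (g := fun x => pd g j x - ∑ k, A j k * x k)
      ((pd_contDiff hg j).sub (hlin _)) ?_
    intro l x hx
    rw [hpsub (pd_contDiff hg j) (hlin _), pd_linear, hA1 j l x hx, sub_self]
  set c : ℝ := g y0 - ∑ k, b k * y0 k - ∑ k, ∑ l, (A k l / 2) * (y0 k * y0 l) with hc
  have hC1 : ∀ x ∈ ball y0 R,
      g x - ∑ k, b k * x k - ∑ k, ∑ l, (A k l / 2) * (x k * x l) = c := by
    refine const_of_pd_zero
      (g := fun x => g x - ∑ k, b k * x k - ∑ k, ∑ l, (A k l / 2) * (x k * x l))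
      ((hg.sub (hlin _)).sub (hquad fun k l => A k l / 2)) ?_
    intro l x hx
    rw [hpsub (hg.sub (hlin _)) (hquad fun k l => A k l / 2), hpsub hg (hlin _), pd_linear,
      pd_quad (fun k l => A k l / 2)]
    have : ∀ k, (A l k / 2 + A k l / 2) = A l k := by
      intro k; rw [hAs k l]; ring
    simp only [this]
    linarith [hB1 l x hx]
  refine ⟨(c, b, fun k l => A k l / 2), ?_⟩
  ext x
  have := hC1 x.1 x.2
  simp only [quadMap, LinearMap.coe_mk, AddHom.coe_mk]
  linarith

/-- A smooth conformal Killing field in dimension at least three is quadratic. -/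
lemma quadratic_of_killing {d : ℕ} (hd : 3 ≤ d) {W : Fin d → Euc d → ℝ}
    (hW : ∀ i, ContDiff ℝ (⊤ : ℕ∞) (W i)) {y0 : Euc d} {R : ℝ}
    (h1 : ∀ i j, i ≠ j → ∀ x ∈ ball y0 R, pd (W i) j x = - pd (W j) i x)
    (h2 : ∀ i j, i ≠ j → ∀ x ∈ ball y0 R, pd (W i) i x = pd (W j) j x) (i : Fin d) :
    (fun x : ball y0 R => W i x.1) ∈ LinearMap.range (quadMap d (ball y0 R)) := by
  refine quadratic_of_third_zero (hW i) ?_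
  intro j k l x hx
  refine tensor_eq_zero hd (fun i j k l => pd (pd (pd (W i) j) k) l x) ?_ ?_ ?_ ?_ i j k l
  · intro i j k l
    have : pd (pd (W i) j) k = pd (pd (W i) k) j := funext fun y => pd_pd_comm (hW i) j k y
    simp only [this]
  · intro i j k l
    exact pd_pd_comm (pd_contDiff (hW i) j) k l x
  · intro i j k l hij
    have e0 : EqOn (pd (W i) j) (fun y => - pd (W j) i y) (ball y0 R) := h1 i j hij
    have e2 := pd_eqOn isOpen_ball (pd_eqOn isOpen_ball e0 k) l hx
    simpa only [pd_neg] using e2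
  · intro i j k l hij
    have e0 : EqOn (pd (W i) i) (pd (W j) j) (ball y0 R) := h2 i j hij
    exact pd_eqOn isOpen_ball (pd_eqOn isOpen_ball e0 k) l hx

/-- Quadratic polynomials are closed under pointwise limits. -/
lemma quadratic_of_tendsto {d : ℕ} {B : Set (Euc d)} {g : ℕ → Euc d → ℝ} {w : Euc d → ℝ}
    (hg : ∀ n, (fun x : B => g n x.1) ∈ LinearMap.range (quadMap d B))
    (hw : ∀ x ∈ B, Tendsto (fun n => g n x) atTop (𝓝 (w x))) :
    (fun x : B => w x.1) ∈ LinearMap.range (quadMap d B) := by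
  have hc := (LinearMap.range (quadMap d B)).closed_of_finiteDimensional
  refine hc.mem_of_tendsto (f := fun n => (fun x : B => g n x.1)) (b := atTop) ?_
    (Eventually.of_forall hg)
  rw [tendsto_pi_nhds]
  exact fun x => hw x.1 x.2

/-- A continuous weak conformal Killing field on a ball is a quadratic polynomial on the concentric
ball of half the radius: its mollifications are smooth conformal Killing fields there. -/
lemma quadratic_of_weak_killing {d : ℕ} (hd : 3 ≤ d) {w : Fin d → Euc d → ℝ}
    (hw : ∀ i, Continuous (w i)) {y0 : Euc d} {ρ : ℝ} (hρ : 0 < ρ)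
    (hweak : ∀ φ : Euc d → ℝ, ContDiff ℝ 1 φ → HasCompactSupport φ → tsupport φ ⊆ ball y0 ρ →
      ∀ i j, i ≠ j → ∫ x, (w i x * pd φ j x + w j x * pd φ i x) = 0 ∧
        ∫ x, (w i x * pd φ i x - w j x * pd φ j x) = 0) (i : Fin d) :
    (fun x : ball y0 (ρ / 2) => w i x.1) ∈ LinearMap.range (quadMap d (ball y0 (ρ / 2))) := by
  let ψ : ℕ → ContDiffBump (0 : Euc d) := fun n =>
    ⟨ρ / 4 / (n + 1), ρ / 2 / (n + 1), by positivity, by gcongr; norm_num⟩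
  let b : ℕ → Euc d → ℝ := fun n => (ψ n).normed volume
  have hbs : ∀ n, ContDiff ℝ (⊤ : ℕ∞) (b n) := fun n => (ψ n).contDiff_normed
  have hb1 : ∀ n, ContDiff ℝ 1 (b n) := fun n => (ψ n).contDiff_normed
  have hbc : ∀ n, HasCompactSupport (b n) := fun n => (ψ n).hasCompactSupport_normed
  have hbt : ∀ n, tsupport (b n) ⊆ closedBall 0 (ρ / 2) := by
    intro n
    rw [(ψ n).tsupport_normed_eq]
    refine closedBall_subset_closedBall ?_
    refine div_le_self (by positivity) ?_
    have : (0:ℝ) ≤ n := n.cast_nonneg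
    linarith
  have hrout : Tendsto (fun n => (ψ n).rOut) atTop (𝓝 0) := by
    have := (tendsto_one_div_add_atTop_nhds_zero_nat (𝕜 := ℝ)).const_mul (ρ / 2)
    simpa [ψ, div_eq_mul_inv] using this
  let W : ℕ → Fin d → Euc d → ℝ := fun n i =>
    convolution (w i) (b n) (ContinuousLinearMap.mul ℝ ℝ) volume
  have hWapply : ∀ n i x, W n i x = ∫ s, w i s * b n (x - s) := fun n i x => rfl
  have hWs : ∀ n i, ContDiff ℝ (⊤ : ℕ∞) (W n i) := fun n i =>
    (hbc n).contDiff_convolution_right _ (hw i).locallyIntegrable (hbs n)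
  have hWpd : ∀ n i j x, pd (W n i) j x = ∫ s, w i s * pd (b n) j (x - s) := by
    intro n i j x
    have h := (hbc n).hasFDerivAt_convolution_right (ContinuousLinearMap.mul ℝ ℝ)
      (hw i).locallyIntegrable (hb1 n) x (μ := volume)
    unfold pd
    rw [h.fderiv, convolution_precompR_apply _ (hw i).locallyIntegrable ((hbc n).fderiv ℝ)
      ((hb1 n).continuous_fderiv one_ne_zero)]
    rfl
  have h_int : ∀ n i j x, Integrable (fun s => w i s * pd (b n) j (x - s)) := by
    intro n i j x
    refine ((hw i).mul ((pd_continuous (hb1 n) j).comp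
      (continuous_const.sub continuous_id))).integrable_of_hasCompactSupport ?_
    refine HasCompactSupport.mul_left ?_
    exact (pd_hasCompactSupport (hbc n) j).comp_homeomorph (Homeomorph.subLeft x)
  have hχ : ∀ n, ∀ x ∈ ball y0 (ρ / 2), ∀ i j, i ≠ j →
      (∫ s, (w i s * pd (b n) j (x - s) + w j s * pd (b n) i (x - s)) = 0) ∧
        ∫ s, (w i s * pd (b n) i (x - s) - w j s * pd (b n) j (x - s)) = 0 := by
    intro n x hx i j hij
    have hpd : ∀ k s, pd (fun s => b n (x - s)) k s = - pd (b n) k (x - s) := by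
      intro k s
      have h := ((hb1 n).differentiable one_ne_zero (x - s)).hasFDerivAt.comp s
        ((hasFDerivAt_id s).const_sub x)
      simp only [Function.comp_def] at h
      simp [pd, h.fderiv]
    have hcs : HasCompactSupport (fun s => b n (x - s)) :=
      (hbc n).comp_homeomorph (Homeomorph.subLeft x)
    have hts : tsupport (fun s => b n (x - s)) ⊆ ball y0 ρ := by
      intro s hs
      have hs' : x - s ∈ tsupport (b n) :=
        tsupport_comp_subset_preimage (b n) (f := fun s => x - s) (by fun_prop) hs
      have h1 := hbt n hs'
      rw [mem_closedBall_zero_iff] at h1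
      rw [mem_ball, dist_comm, dist_eq_norm]
      rw [mem_ball, dist_comm, dist_eq_norm] at hx
      calc ‖y0 - s‖ = ‖(y0 - x) + (x - s)‖ := by congr 1; abel
        _ ≤ ‖y0 - x‖ + ‖x - s‖ := norm_add_le _ _
        _ < ρ := by linarith
    have := hweak (fun s => b n (x - s)) ((hb1 n).comp (contDiff_const.sub contDiff_id)) hcs hts i j hij
    simp only [hpd] at this
    constructor
    · rw [← neg_eq_zero, ← integral_neg, ← this.1]
      congr 1; ext s; ring
    · rw [← neg_eq_zero, ← integral_neg, ← this.2]
      congr 1; ext s; ring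
  refine quadratic_of_tendsto (g := fun n => W n i) (fun n => ?_) ?_
  · refine quadratic_of_killing hd (hWs n) ?_ ?_ i
    · intro i j hij x hx
      have := (hχ n x hx i j hij).1
      rw [integral_add (h_int n i j x) (h_int n j i x)] at this
      rw [hWpd, hWpd]; linarith
    · intro i j hij x hx
      have := (hχ n x hx i j hij).2
      rw [integral_sub (h_int n i i x) (h_int n j j x)] at this
      rw [hWpd, hWpd]; linarith
  · intro x _
    have := ContDiffBump.convolution_tendsto_right_of_continuous (μ := volume) hrout (hw i) x
    refine this.congr fun n => ?_
    rw [convolution_lsmul_swap, hWapply]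
    congr 1; ext s
    rw [smul_eq_mul, mul_comm]

/-! ### Conformal linear maps -/

/-- A linear map of `ℝ^d` is conformal: a positive multiple of an orthogonal matrix. -/
def ConfLin {d : ℕ} (L : Euc d →L[ℝ] Euc d) : Prop :=
  ∃ c : ℝ, 0 < c ∧ ∃ O ∈ Matrix.orthogonalGroup (Fin d) ℝ,
    (L : Euc d →ₗ[ℝ] Euc d) = c • O.mulVecLin

lemma conf_dot {d : ℕ} {L : Euc d →L[ℝ] Euc d} {c : ℝ} {O : Matrix (Fin d) (Fin d) ℝ}
    (hO : O ∈ Matrix.orthogonalGroup (Fin d) ℝ) (hL : (L : Euc d →ₗ[ℝ] Euc d) = c • O.mulVecLin)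
    (u v : Euc d) : ∑ k, L u k * L v k = c ^ 2 * ∑ k, u k * v k := by
  have hLu : ∀ u, L u = c • O.mulVec u := fun u => by
    have := congrArg (fun T : Euc d →ₗ[ℝ] Euc d => T u) hL
    simpa using this
  have h1 : ∑ k, O.mulVec u k * O.mulVec v k = ∑ k, u k * v k := by
    change (O.mulVec u) ⬝ᵥ (O.mulVec v) = u ⬝ᵥ v
    have h2 : O.transpose * O = 1 := by
      have := (Matrix.mem_orthogonalGroup_iff' (Fin d) ℝ).1 hO
      simpa [Matrix.star_eq_conjTranspose] using this
    rw [Matrix.dotProduct_mulVec, Matrix.vecMul_mulVec, h2, Matrix.vecMul_one]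
  simp only [hLu, Pi.smul_apply, smul_eq_mul]
  rw [← h1, Finset.mul_sum]
  exact Finset.sum_congr rfl fun k _ => by ring

lemma ConfLin.injective {d : ℕ} {L : Euc d →L[ℝ] Euc d} (h : ConfLin L) : Function.Injective L := by
  obtain ⟨c, hc, O, hO, hL⟩ := h
  rw [injective_iff_map_eq_zero]
  intro u hu
  have := conf_dot hO hL u u
  simp only [hu, Pi.zero_apply, mul_zero, Finset.sum_const_zero] at this
  have h0 : ∑ k, u k * u k = 0 := by
    rcases mul_eq_zero.1 this.symm with h | h
    · exact absurd h (by positivity)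
    · exact h
  ext k
  have := (Finset.sum_eq_zero_iff_of_nonneg (fun k _ => mul_self_nonneg (u k))).1 h0 k
    (Finset.mem_univ k)
  simpa using this

/-- A conformal linear map as a continuous linear equivalence. -/
noncomputable def ConfLin.equiv {d : ℕ} {L : Euc d →L[ℝ] Euc d} (h : ConfLin L) :
    Euc d ≃L[ℝ] Euc d :=
  (LinearEquiv.ofInjectiveEndo (L : Euc d →ₗ[ℝ] Euc d) h.injective).toContinuousLinearEquiv

lemma ConfLin.coe_equiv {d : ℕ} {L : Euc d →L[ℝ] Euc d} (h : ConfLin L) :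
    (h.equiv : Euc d →L[ℝ] Euc d) = L := by
  ext x; rfl

/-- If `P` is a right inverse of the conformal `L1`, then `L2 ∘ P` is again conformal. -/
lemma conf_comp_dot {d : ℕ} {L1 L2 P : Euc d →L[ℝ] Euc d} (h1 : ConfLin L1) (h2 : ConfLin L2)
    (hP : ∀ u, L1 (P u) = u) :
    ∃ μ : ℝ, ∀ u v : Euc d, ∑ k, L2 (P u) k * L2 (P v) k = μ * ∑ k, u k * v k := by
  obtain ⟨c1, hc1, O1, hO1, hL1⟩ := h1
  obtain ⟨c2, hc2, O2, hO2, hL2⟩ := h2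
  refine ⟨c2 ^ 2 / c1 ^ 2, fun u v => ?_⟩
  have a := conf_dot hO1 hL1 (P u) (P v)
  rw [hP, hP] at a
  rw [conf_dot hO2 hL2, a]
  field_simp

/-- If `I + tA` is conformal then the deviation of `A` from an infinitesimal conformal matrix is
quadratic in `A`. -/
lemma near_id_conf {d : ℕ} {A : Fin d → Fin d → ℝ} {t μ : ℝ} (ht : 0 < t)
    (h : ∀ i j, ∑ k, ((if k = i then 1 else 0) + t * A k i) * ((if k = j then 1 else 0) + t * A k j)
      = if i = j then μ else 0) {i j : Fin d} (hij : i ≠ j) :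
    |A i j + A j i| ≤ t * ∑ k, ∑ l, A k l ^ 2 ∧ |A i i - A j j| ≤ t * ∑ k, ∑ l, A k l ^ 2 := by
  have hexp : ∀ i j, ∑ k, ((if k = i then 1 else 0) + t * A k i)
      * ((if k = j then 1 else 0) + t * A k j)
      = (if i = j then 1 else 0) + t * (A i j + A j i) + t ^ 2 * ∑ k, A k i * A k j := by
    intro i j
    have : ∀ k, ((if k = i then 1 else 0) + t * A k i) * ((if k = j then 1 else 0) + t * A k j)
        = (if k = i then (if i = j then 1 else 0) + t * A i j else 0)
          + (if k = j then t * A j i else 0) + t ^ 2 * (A k i * A k j) := by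
      intro k
      split_ifs <;> subst_vars <;> first | contradiction | ring
    simp only [this, Finset.sum_add_distrib, ← Finset.mul_sum]
    simp
    ring
  have hS : ∑ k, ∑ l, A k l ^ 2 = ∑ l, ∑ k, A k l ^ 2 := Finset.sum_comm
  have hcol : ∑ k, A k i ^ 2 + ∑ k, A k j ^ 2 ≤ ∑ k, ∑ l, A k l ^ 2 := by
    rw [hS, ← Finset.sum_pair hij (f := fun l => ∑ k, A k l ^ 2)]
    exact Finset.sum_le_sum_of_subset_of_nonneg (Finset.subset_univ _)
      fun l _ _ => Finset.sum_nonneg fun k _ => sq_nonneg _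
  have hci : 0 ≤ ∑ k, A k i ^ 2 := Finset.sum_nonneg fun k _ => sq_nonneg _
  have hcj : 0 ≤ ∑ k, A k j ^ 2 := Finset.sum_nonneg fun k _ => sq_nonneg _
  have hcs : |∑ k, A k i * A k j| ≤ ∑ k, A k i ^ 2 + ∑ k, A k j ^ 2 := by
    rw [← Finset.sum_add_distrib]
    refine (Finset.abs_sum_le_sum_abs _ _).trans (Finset.sum_le_sum fun k _ => ?_)
    rw [abs_le]; constructor <;> nlinarith [sq_nonneg (A k i + A k j), sq_nonneg (A k i - A k j)]
  have e1 := h i j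
  rw [hexp, if_neg hij, if_neg hij] at e1
  have e2 := h i i
  have e3 := h j j
  rw [hexp, if_pos rfl, if_pos rfl] at e2 e3
  have hsq : ∀ l, ∑ k, A k l * A k l = ∑ k, A k l ^ 2 := fun l =>
    Finset.sum_congr rfl fun k _ => by ring
  rw [hsq] at e2 e3
  constructor
  · have : A i j + A j i = - (t * ∑ k, A k i * A k j) := by
      have : t * ((A i j + A j i) + t * ∑ k, A k i * A k j) = 0 := by linarith
      rcases mul_eq_zero.1 this with h | h
      · exact absurd h ht.ne'
      · linarith
    rw [this, abs_neg, abs_mul, abs_of_pos ht]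
    exact mul_le_mul_of_nonneg_left (hcs.trans hcol) ht.le
  · have : A i i - A j j = t * ((∑ k, A k j ^ 2 - ∑ k, A k i ^ 2) / 2) := by
      have : t * (2 * (A i i - A j j) - t * (∑ k, A k j ^ 2 - ∑ k, A k i ^ 2)) = 0 := by linarith
      rcases mul_eq_zero.1 this with h | h
      · exact absurd h ht.ne'
      · linarith
    rw [this, abs_mul, abs_of_pos ht]
    refine mul_le_mul_of_nonneg_left ?_ ht.le
    rw [abs_le]; constructor <;> linarith

/-! ### Regularity of conformal maps in dimension at least three -/

lemma conf_contDiffOn_one {d : ℕ} {f : Euc d → Euc d} {Ω : Set (Euc d)} (hΩ : IsOpen Ω)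
    (hf : ∀ x ∈ Ω, DifferentiableAt ℝ f x) (hcont : ContinuousOn (fun x => fderiv ℝ f x) Ω) :
    ContDiffOn ℝ 1 f Ω := by
  have := (contDiffOn_succ_iff_fderiv_of_isOpen (𝕜 := ℝ) (f := f) (n := 0) hΩ).2
    ⟨fun x hx => (hf x hx).differentiableWithinAt, by simp, contDiffOn_zero.2 hcont⟩
  simpa using this

/-- A local inverse of a conformal `C¹` map with the uniform bounds used below. -/
lemma exists_local_inverse {d : ℕ} {f : Euc d → Euc d} {Ω : Set (Euc d)} (hΩ : IsOpen Ω)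
    (hf : ∀ x ∈ Ω, DifferentiableAt ℝ f x) (hcf : ∀ x ∈ Ω, ConfLin (fderiv ℝ f x))
    (hcont : ContinuousOn (fun x => fderiv ℝ f x) Ω) {x0 : Euc d} (hx0 : x0 ∈ Ω) :
    ∃ (ψ : Euc d → Euc d) (ρ R C : ℝ), 0 < ρ ∧ 0 < R ∧ 0 < C ∧ closedBall x0 (2 * ρ) ⊆ Ω ∧
      (∀ y ∈ ball (f x0) R, f (ψ y) = y ∧ ψ y ∈ ball x0 ρ ∧ ContDiffAt ℝ 1 ψ y ∧
        ‖fderiv ℝ ψ y‖ ≤ C ∧ ∀ u, fderiv ℝ f (ψ y) (fderiv ℝ ψ y u) = u) ∧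
      ∀ᶠ x in 𝓝 x0, ψ (f x) = x := by
  have hC1 := conf_contDiffOn_one hΩ hf hcont
  have hat : ∀ x ∈ Ω, ContDiffAt ℝ 1 f x := fun x hx => hC1.contDiffAt (hΩ.mem_nhds hx)
  have hfd : ∀ x (hx : x ∈ Ω), HasFDerivAt f ((hcf x hx).equiv : Euc d →L[ℝ] Euc d) x := by
    intro x hx
    rw [ConfLin.coe_equiv]
    exact (hf x hx).hasFDerivAt
  set h := (hat x0 hx0).toOpenPartialHomeomorph f (hfd x0 hx0) one_ne_zero with hh
  have hcoe : (h : Euc d → Euc d) = f := (hat x0 hx0).toOpenPartialHomeomorph_coe _ one_ne_zero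
  have hsrc : x0 ∈ h.source := (hat x0 hx0).mem_toOpenPartialHomeomorph_source _ one_ne_zero
  have htgt : f x0 ∈ h.target := by
    have := h.map_source hsrc
    rwa [hcoe] at this
  have hinv0 : h.symm (f x0) = x0 := by
    have := h.left_inv hsrc
    rwa [hcoe] at this
  obtain ⟨r, hr, hrΩ⟩ := Metric.isOpen_iff.1 hΩ x0 hx0
  have hrho : closedBall x0 (2 * (r / 4)) ⊆ Ω := by
    refine (closedBall_subset_ball ?_).trans hrΩ
    linarith
  have hsymm : ∀ y ∈ h.target, h.symm y ∈ Ω → ContDiffAt ℝ 1 h.symm y := by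
    intro y hy hyΩ
    refine h.contDiffAt_symm hy (f₀' := (hcf _ hyΩ).equiv) ?_ ?_
    · rw [hcoe]; exact hfd _ hyΩ
    · rw [hcoe]; exact hat _ hyΩ
  have hcs : ContinuousAt h.symm (f x0) := h.continuousAt_symm htgt
  have hball : ∀ᶠ y in 𝓝 (f x0), h.symm y ∈ ball x0 (r / 4) := by
    have : Tendsto h.symm (𝓝 (f x0)) (𝓝 x0) := by
      have := hcs.tendsto
      rwa [hinv0] at this
    exact this (ball_mem_nhds _ (by positivity))
  have h1 := hsymm (f x0) htgt (by rwa [hinv0])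
  have hbd : ∀ᶠ y in 𝓝 (f x0), ‖fderiv ℝ h.symm y‖ < ‖fderiv ℝ h.symm (f x0)‖ + 1 :=
    ((h1.continuousAt_fderiv one_ne_zero).norm).eventually_lt continuousAt_const
      (lt_add_one _)
  have htg : ∀ᶠ y in 𝓝 (f x0), y ∈ h.target := h.open_target.mem_nhds htgt
  obtain ⟨R, hR, hRall⟩ := Metric.eventually_nhds_iff_ball.1 (hball.and (hbd.and htg))
  refine ⟨h.symm, r / 4, R, ‖fderiv ℝ h.symm (f x0)‖ + 1, by positivity, hR, by positivity,
    hrho, ?_, ?_⟩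
  · intro y hy
    obtain ⟨a1, a2, a3⟩ := hRall y hy
    have hyΩ : h.symm y ∈ Ω :=
      hrho (ball_subset_closedBall (ball_subset_ball (by linarith) a1))
    have hfy : f (h.symm y) = y := by
      have := h.right_inv a3
      rwa [hcoe] at this
    refine ⟨hfy, a1, hsymm y a3 hyΩ, a2.le, fun u => ?_⟩
    have hs := h.hasFDerivAt_symm a3 (f' := (hcf _ hyΩ).equiv) (by rw [hcoe]; exact hfd _ hyΩ)
    rw [hs.fderiv]
    have := (hcf _ hyΩ).equiv.apply_symm_apply u
    have e := congrArg (fun T : Euc d →L[ℝ] Euc d => T ((hcf _ hyΩ).equiv.symm u))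
      (hcf _ hyΩ).coe_equiv
    exact e.symm.trans this
  · filter_upwards [h.open_source.mem_nhds hsrc] with x hx
    have := h.left_inv hx
    rwa [hcoe] at this

/-- In dimension at least three, `Df(x) e` is locally a smooth function (a quadratic polynomial)
of `f x`, because `y ↦ Df(f⁻¹ y) e` generates the conformal flow `y ↦ f (f⁻¹ y + t e)`. -/
lemma fderiv_eq_smooth_comp {d : ℕ} (hd : 3 ≤ d) {f : Euc d → Euc d} {Ω : Set (Euc d)}
    (hΩ : IsOpen Ω) (hf : ∀ x ∈ Ω, DifferentiableAt ℝ f x)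
    (hcf : ∀ x ∈ Ω, ConfLin (fderiv ℝ f x))
    (hcont : ContinuousOn (fun x => fderiv ℝ f x) Ω) {x0 : Euc d} (hx0 : x0 ∈ Ω) (e : Euc d) :
    ∃ w : Euc d → Euc d, ContDiff ℝ (⊤ : ℕ∞) w ∧ ∀ᶠ x in 𝓝 x0, fderiv ℝ f x e = w (f x) := by
  obtain ⟨ψ, ρ, R, C, hρ, hR, hC, hball, hψ, hψf⟩ := exists_local_inverse hΩ hf hcf hcont hx0
  have hC1 := conf_contDiffOn_one hΩ hf hcont
  have hat : ∀ x ∈ Ω, ContDiffAt ℝ 1 f x := fun x hx => hC1.contDiffAt (hΩ.mem_nhds hx)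
  have hψΩ : ∀ y ∈ ball (f x0) R, ψ y ∈ closedBall x0 (2 * ρ) := fun y hy =>
    ball_subset_closedBall (ball_subset_ball (by linarith) (hψ y hy).2.1)
  -- the step sizes keep `ψ y + tₙ e` inside the compact ball of radius `2ρ`
  set τ : ℝ := ρ / (‖e‖ + 1) with hτ
  have hτ0 : 0 < τ := by positivity
  have hτe : τ * ‖e‖ ≤ ρ := by
    rw [hτ, div_mul_eq_mul_div, div_le_iff₀ (by positivity)]
    nlinarith [norm_nonneg e]
  set t : ℕ → ℝ := fun n => τ / (n + 1) with ht
  have ht0 : ∀ n, 0 < t n := fun n => by positivity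
  have htτ : ∀ n, t n ≤ τ := fun n =>
    div_le_self hτ0.le (by have : (0:ℝ) ≤ n := n.cast_nonneg; linarith)
  have htlim : Tendsto t atTop (𝓝 0) := by
    have := (tendsto_one_div_add_atTop_nhds_zero_nat (𝕜 := ℝ)).const_mul τ
    simpa [ht, div_eq_mul_inv] using this
  have hshift : ∀ n, ∀ y ∈ ball (f x0) R, ψ y + t n • e ∈ closedBall x0 (2 * ρ) := by
    intro n y hy
    have h1 := (hψ y hy).2.1
    rw [mem_ball, dist_eq_norm] at h1
    rw [mem_closedBall, dist_eq_norm]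
    have h2 : ‖t n • e‖ ≤ ρ := by
      rw [norm_smul, Real.norm_of_nonneg (ht0 n).le]
      exact (mul_le_mul_of_nonneg_right (htτ n) (norm_nonneg e)).trans hτe
    calc ‖ψ y + t n • e - x0‖ = ‖(ψ y - x0) + t n • e‖ := by congr 1; abel
      _ ≤ ‖ψ y - x0‖ + ‖t n • e‖ := norm_add_le _ _
      _ ≤ 2 * ρ := by linarith
  -- difference quotients of the conformal maps `y ↦ f (ψ y + t e)`, which equal the identity at `t = 0`
  set v : ℕ → Fin d → Euc d → ℝ := fun n k y => (t n)⁻¹ * (f (ψ y + t n • e) k - y k) with hv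
  set w : Fin d → Euc d → ℝ := fun k y => fderiv ℝ f (ψ y) e k with hw
  have hGd : ∀ n, ∀ y ∈ ball (f x0) R, HasFDerivAt (fun y => f (ψ y + t n • e))
      ((fderiv ℝ f (ψ y + t n • e)).comp (fderiv ℝ ψ y)) y := by
    intro n y hy
    have h1 := (hf _ (hball (hshift n y hy))).hasFDerivAt
    have h2 := ((hψ y hy).2.2.1.differentiableAt one_ne_zero).hasFDerivAt.add_const (t n • e)
    exact h1.comp y h2
  have hpd : ∀ n, ∀ y ∈ ball (f x0) R, ∀ k l, pd (v n k) l y = (t n)⁻¹ *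
      (fderiv ℝ f (ψ y + t n • e) (fderiv ℝ ψ y (Pi.single l 1)) k
        - if k = l then 1 else 0) := by
    intro n y hy k l
    have h1 := (hasFDerivAt_pi'.1 (hGd n y hy) k).sub (hasFDerivAt_apply k y)
    have h2 := h1.const_mul (t n)⁻¹
    have h3 : HasFDerivAt (v n k) _ y := h2
    simp [pd, h3.fderiv, Pi.single_apply]
  have hM : ∀ n, ∀ y ∈ ball (f x0) R, ∀ k l,
      fderiv ℝ f (ψ y + t n • e) (fderiv ℝ ψ y (Pi.single l 1)) k
        = (if k = l then 1 else 0) + t n * pd (v n k) l y := by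
    intro n y hy k l
    rw [hpd n y hy, mul_inv_cancel_left₀ (ht0 n).ne']
    ring
  -- the cutoff equals `1` on the ball of radius `R / 2` and is supported inside that of radius `R`
  let bump : ContDiffBump (f x0) := ⟨R / 2, 3 * R / 4, by positivity, by linarith⟩
  have hη : ContDiff ℝ 1 bump := bump.contDiff
  have hηs : tsupport bump ⊆ ball (f x0) R := by
    rw [bump.tsupport_eq]
    exact closedBall_subset_ball (by change 3 * R / 4 < R; linarith)
  have hvs : ∀ n k, ContDiffOn ℝ 1 (v n k) (ball (f x0) R) := by
    intro n k y hy
    have h1 : ContDiffAt ℝ 1 (fun y => f (ψ y + t n • e)) y :=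
      (hat _ (hball (hshift n y hy))).comp y ((hψ y hy).2.2.1.add contDiffAt_const)
    exact (contDiffAt_const.mul ((contDiffAt_pi.1 h1 k).sub
      (contDiffAt_pi.1 contDiffAt_id k))).contDiffWithinAt
  obtain ⟨D, hD⟩ : ∃ D, ∀ x ∈ closedBall x0 (2 * ρ), ‖fderiv ℝ f x‖ ≤ D :=
    (isCompact_closedBall x0 (2 * ρ)).exists_bound_of_continuousOn (hcont.mono hball)
  have hvC : ∀ n k, ∀ y ∈ ball (f x0) R, |v n k y| ≤ D * ‖e‖ := by
    intro n k y hy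
    have h1 := (convex_closedBall x0 (2 * ρ)).norm_image_sub_le_of_norm_fderiv_le (𝕜 := ℝ)
      (fun x hx => hf x (hball hx)) hD (hψΩ y hy) (hshift n y hy)
    rw [(hψ y hy).1, add_sub_cancel_left, norm_smul, Real.norm_of_nonneg (ht0 n).le] at h1
    have h2 : |f (ψ y + t n • e) k - y k| ≤ ‖f (ψ y + t n • e) - y‖ :=
      norm_le_pi_norm (f (ψ y + t n • e) - y) k
    rw [hv]
    simp only
    rw [abs_mul, abs_of_pos (inv_pos.2 (ht0 n)), inv_mul_le_iff₀ (ht0 n)]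
    linarith
  have hA : ∀ n, ∀ x ∈ ball (f x0) R, ∀ i j, i ≠ j →
      |pd (v n i) j x + pd (v n j) i x| ≤ t n * ∑ k, ∑ l, (pd (v n k) l x) ^ 2 ∧
      |pd (v n i) i x - pd (v n j) j x| ≤ t n * ∑ k, ∑ l, (pd (v n k) l x) ^ 2 := by
    intro n y hy i j hij
    obtain ⟨μ, hμ⟩ := conf_comp_dot (hcf _ (hball (hψΩ y hy)))
      (hcf _ (hball (hshift n y hy))) (hψ y hy).2.2.2.2
    refine near_id_conf (A := fun k l => pd (v n k) l y) (μ := μ) (ht0 n) ?_ hij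
    intro i j
    have := hμ (Pi.single i 1) (Pi.single j 1)
    simp only [hM n y hy] at this
    rw [this]
    simp only [Pi.single_apply, mul_ite, mul_one, mul_zero, Finset.sum_ite_eq', Finset.mem_univ,
      if_true]
    exact if_congr eq_comm rfl rfl
  -- `tₙ Dvₙ = Df(ψ y + tₙ e) Dψ(y) - I` tends to zero by uniform continuity of `Df`
  have hε : ∀ ε > 0, ∀ᶠ n in atTop, ∀ x ∈ ball (f x0) R,
      (t n) ^ 2 * ∑ k, ∑ l, (pd (v n k) l x) ^ 2 ≤ ε := by
    intro ε hε
    set κ : ℝ := Real.sqrt (ε / (d ^ 2 + 1)) with hκ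
    have hκ0 : 0 < κ := Real.sqrt_pos.2 (by positivity)
    have hκ2 : κ ^ 2 = ε / (d ^ 2 + 1) := Real.sq_sqrt (by positivity)
    obtain ⟨δ, hδ, huc⟩ := Metric.uniformContinuousOn_iff.1
      ((isCompact_closedBall x0 (2 * ρ)).uniformContinuousOn_of_continuous (hcont.mono hball))
      (κ / C) (by positivity)
    have hte : ∀ᶠ n in atTop, t n * ‖e‖ < δ := by
      have := htlim.mul_const ‖e‖
      rw [zero_mul] at this
      exact this.eventually_lt_const hδ
    filter_upwards [hte] with n hn y hy
    have hclose : ‖fderiv ℝ f (ψ y + t n • e) - fderiv ℝ f (ψ y)‖ ≤ κ / C := by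
      have := huc _ (hshift n y hy) _ (hψΩ y hy) (by
        rw [dist_eq_norm, add_sub_cancel_left, norm_smul, Real.norm_of_nonneg (ht0 n).le]
        exact hn)
      rw [dist_eq_norm] at this
      exact this.le
    have hentry : ∀ k l, (t n * pd (v n k) l y) ^ 2 ≤ κ ^ 2 := by
      intro k l
      rw [sq_le_sq, abs_of_pos hκ0]
      have e1 : t n * pd (v n k) l y = ((fderiv ℝ f (ψ y + t n • e) - fderiv ℝ f (ψ y))
          (fderiv ℝ ψ y (Pi.single l 1))) k := by
        have a := hM n y hy k l
        have b := (hψ y hy).2.2.2.2 (Pi.single l 1)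
        rw [sub_apply, Pi.sub_apply, b, a, Pi.single_apply]
        ring
      rw [e1]
      refine (norm_le_pi_norm (_ : Euc d) k).trans ?_
      refine (ContinuousLinearMap.le_opNorm _ _).trans ?_
      have h2 : ‖fderiv ℝ ψ y (Pi.single l 1)‖ ≤ C := by
        refine (ContinuousLinearMap.le_opNorm _ _).trans ?_
        rw [Pi.norm_single, norm_one, mul_one]
        exact (hψ y hy).2.2.2.1
      calc _ ≤ κ / C * C := mul_le_mul hclose h2 (norm_nonneg _) (by positivity)
        _ = κ := by field_simp
    calc (t n) ^ 2 * ∑ k, ∑ l, (pd (v n k) l y) ^ 2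
        = ∑ k : Fin d, ∑ l : Fin d, (t n * pd (v n k) l y) ^ 2 := by
          simp only [Finset.mul_sum, mul_pow]
      _ ≤ ∑ k : Fin d, ∑ l : Fin d, κ ^ 2 :=
          Finset.sum_le_sum fun k _ => Finset.sum_le_sum fun l _ => hentry k l
      _ = d ^ 2 * (ε / (d ^ 2 + 1)) := by simp [hκ2]; ring
      _ ≤ ε := by
          rw [mul_div_assoc', div_le_iff₀ (by positivity)]
          nlinarith
  have hlim : ∀ x ∈ ball (f x0) R, ∀ k, Tendsto (fun n => v n k x) atTop (𝓝 (w k x)) := by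
    intro y hy k
    have h1 : HasDerivAt (fun s : ℝ => f (ψ y + s • e)) (fderiv ℝ f (ψ y) e) 0 :=
      (hf _ (hball (hψΩ y hy))).hasFDerivAt.hasLineDerivAt e
    have h2 := hasDerivAt_iff_tendsto_slope_zero.1 h1
    have h3 : Tendsto t atTop (𝓝[≠] 0) :=
      tendsto_nhdsWithin_iff.2 ⟨htlim, Eventually.of_forall fun n => (ht0 n).ne'⟩
    have h4 := tendsto_pi_nhds.1 (h2.comp h3) k
    refine h4.congr fun n => ?_
    simp [hv, (hψ y hy).1]
  -- the cut-off limit field is continuous and weakly conformal Killing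
  have hwc : ∀ i, Continuous (fun y => bump y * w i y) := by
    intro i
    refine continuous_of_tsupport fun y hy => ?_
    have hyb : y ∈ ball (f x0) R := hηs (tsupport_mul_subset_left hy)
    refine bump.continuous.continuousAt.mul ?_
    have h1 : ContinuousAt (fun y => fderiv ℝ f (ψ y)) y :=
      ContinuousAt.comp (f := ψ) (g := fun x => fderiv ℝ f x)
        (hcont.continuousAt (hΩ.mem_nhds (hball (hψΩ y hyb)))) (hψ y hyb).2.2.1.continuousAt
    exact continuousAt_pi.1 (h1.clm_apply continuousAt_const) i
  have hone : ∀ x ∈ ball (f x0) (R / 2), (bump : Euc d → ℝ) =ᶠ[𝓝 x] fun _ => 1 := fun x hx =>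
    bump.eventuallyEq_one_of_mem_ball hx
  have hquad := quadratic_of_weak_killing hd hwc (y0 := f x0) (ρ := R / 2) (by positivity)
    (fun φ hφ hφc hφs i j hij =>
      weak_conformal_killing (by omega) hη hηs bump.hasCompactSupport htlim (fun n => (ht0 n).le)
        hvs hvC hA hε hlim hφ hφc (fun x hx => hone x (hφs hx)) hij)
  choose p hp using hquad
  refine ⟨fun y i => (p i).1 + ∑ k, (p i).2.1 k * y k + ∑ k, ∑ l, (p i).2.2 k l * (y k * y l),
    ?_, ?_⟩
  · rw [contDiff_pi]
    intro i
    fun_prop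
  · have hfc : ∀ᶠ x in 𝓝 x0, f x ∈ ball (f x0) (R / 2 / 2) :=
      (hf x0 hx0).continuousAt (ball_mem_nhds _ (by positivity))
    filter_upwards [hfc, hψf] with x hx hxψ
    ext i
    have := congrFun (hp i) ⟨f x, hx⟩
    have hb : bump (f x) = 1 :=
      (hone (f x) (ball_subset_ball (by linarith) hx)).self_of_nhds
    simp only [quadMap, LinearMap.coe_mk, AddHom.coe_mk, hb, hw, hxψ, one_mul] at this
    exact this.symm

/-- `C¹` conformal maps in dimension at least three are smooth, by bootstrapping: `Df e` is a smooth
function of `f`, so `f ∈ C^n` implies `Df ∈ C^n`. -/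
lemma conf_smooth_of_three_le {d : ℕ} (hd : 3 ≤ d) {f : Euc d → Euc d} {Ω : Set (Euc d)}
    (hΩ : IsOpen Ω) (hf : ∀ x ∈ Ω, DifferentiableAt ℝ f x)
    (hcf : ∀ x ∈ Ω, ConfLin (fderiv ℝ f x))
    (hcont : ContinuousOn (fun x => fderiv ℝ f x) Ω) : ContDiffOn ℝ (⊤ : ℕ∞) f Ω := by
  rw [contDiffOn_infty]
  intro n
  induction n with
  | zero =>
    exact contDiffOn_zero.2 fun x hx => (hf x hx).continuousAt.continuousWithinAt
  | succ n ih =>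
    push_cast
    refine (contDiffOn_succ_iff_fderiv_of_isOpen hΩ).2
      ⟨fun x hx => (hf x hx).differentiableWithinAt, by simp, ?_⟩
    rw [contDiffOn_clm_apply]
    intro e x hx
    obtain ⟨w, hw, hwe⟩ := fderiv_eq_smooth_comp hd hΩ hf hcf hcont hx e
    have h1 : ContDiffAt ℝ n (fun x => w (f x)) x :=
      (hw.of_le (by exact_mod_cast le_top)).contDiffAt.comp x (ih.contDiffAt (hΩ.mem_nhds hx))
    exact (h1.congr_of_eventuallyEq hwe).contDiffWithinAt

/-! ### Regularity of conformal maps of the plane -/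

/-- Maps of the plane satisfying the Cauchy–Riemann equations are smooth. -/
lemma smooth_of_cauchy_riemann {g : Euc 2 → Euc 2} {Ω : Set (Euc 2)} (hΩ : IsOpen Ω)
    (hg : ∀ x ∈ Ω, DifferentiableAt ℝ g x)
    (h0 : ∀ x ∈ Ω, fderiv ℝ g x (Pi.single 1 1) 0 = - fderiv ℝ g x (Pi.single 0 1) 1)
    (h1 : ∀ x ∈ Ω, fderiv ℝ g x (Pi.single 1 1) 1 = fderiv ℝ g x (Pi.single 0 1) 0) :
    ContDiffOn ℝ (⊤ : ℕ∞) g Ω := by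
  let E : Euc 2 ≃L[ℝ] ℂ := Complex.basisOneI.equivFunL.symm
  have hE : ∀ v : Euc 2, E v = v 0 + v 1 * Complex.I := by
    intro v
    change Complex.basisOneI.equivFun.symm v = _
    simp [Module.Basis.equivFun_symm_apply, Fin.sum_univ_two]
  have hE1 : E.symm 1 = Pi.single 0 1 := by
    rw [ContinuousLinearEquiv.symm_apply_eq, hE]; simp
  have hEI : E.symm Complex.I = Pi.single 1 1 := by
    rw [ContinuousLinearEquiv.symm_apply_eq, hE]; simp
  let F : ℂ → ℂ := fun z => E (g (E.symm z))
  have hFd : ∀ z, E.symm z ∈ Ω → HasFDerivAt F ((E : Euc 2 →L[ℝ] ℂ).comp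
      ((fderiv ℝ g (E.symm z)).comp (E.symm : ℂ →L[ℝ] Euc 2))) z := by
    intro z hz
    exact E.hasFDerivAt.comp z ((hg _ hz).hasFDerivAt.comp z E.symm.hasFDerivAt)
  have hO : IsOpen (E.symm ⁻¹' Ω) := hΩ.preimage E.symm.continuous
  have hF : DifferentiableOn ℂ F (E.symm ⁻¹' Ω) := by
    intro z hz
    refine DifferentiableAt.differentiableWithinAt ?_
    rw [differentiableAt_complex_iff_differentiableAt_real]
    refine ⟨(hFd z hz).differentiableAt, ?_⟩
    rw [(hFd z hz).fderiv]
    simp only [ContinuousLinearMap.comp_apply, ContinuousLinearEquiv.coe_coe, hE1, hEI, hE,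
      h0 _ hz, h1 _ hz, smul_eq_mul]
    apply Complex.ext <;> simp
  intro x hx
  have hz : E.symm (E x) ∈ Ω := by simpa using hx
  have hA : AnalyticAt ℂ F (E x) := hF.analyticAt (hO.mem_nhds hz)
  have hR : ContDiffAt ℝ (⊤ : ℕ∞) F (E x) := (hA.contDiffAt (n := (⊤ : ℕ∞))).restrict_scalars ℝ
  have h2 : ContDiffAt ℝ (⊤ : ℕ∞) (fun x => E.symm (F (E x))) x :=
    E.symm.contDiff.contDiffAt.comp x (hR.comp x E.contDiff.contDiffAt)
  have h3 : (fun x => E.symm (F (E x))) = g := by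
    ext1 x; simp [F]
  rw [h3] at h2
  exact h2.contDiffWithinAt

/-- `C¹` conformal maps of the plane are smooth: locally holomorphic or antiholomorphic. -/
lemma conf_smooth_two {f : Euc 2 → Euc 2} {Ω : Set (Euc 2)}
    (hΩ : IsOpen Ω) (hf : ∀ x ∈ Ω, DifferentiableAt ℝ f x)
    (hcf : ∀ x ∈ Ω, ConfLin (fderiv ℝ f x))
    (hcont : ContinuousOn (fun x => fderiv ℝ f x) Ω) : ContDiffOn ℝ (⊤ : ℕ∞) f Ω := by
  set J : Euc 2 → ℝ := fun x => fderiv ℝ f x (Pi.single 0 1) 0 * fderiv ℝ f x (Pi.single 1 1) 1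
    - fderiv ℝ f x (Pi.single 0 1) 1 * fderiv ℝ f x (Pi.single 1 1) 0 with hJ
  have hJc : ContinuousOn J Ω := by
    have h : ∀ v k, ContinuousOn (fun x => fderiv ℝ f x v k) Ω := fun v k =>
      continuousOn_pi.1 (hcont.clm_apply continuousOn_const) k
    exact ((h _ _).mul (h _ _)).sub ((h _ _).mul (h _ _))
  have key : ∀ x ∈ Ω, (0 < J x ∧ fderiv ℝ f x (Pi.single 1 1) 0 = - fderiv ℝ f x (Pi.single 0 1) 1 ∧
      fderiv ℝ f x (Pi.single 1 1) 1 = fderiv ℝ f x (Pi.single 0 1) 0) ∨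
      (J x < 0 ∧ fderiv ℝ f x (Pi.single 1 1) 0 = fderiv ℝ f x (Pi.single 0 1) 1 ∧
      fderiv ℝ f x (Pi.single 1 1) 1 = - fderiv ℝ f x (Pi.single 0 1) 0) := by
    intro x hx
    obtain ⟨c, hc, O, hO, hL⟩ := hcf x hx
    have e1 := conf_dot hO hL (Pi.single 0 1) (Pi.single 0 1)
    have e2 := conf_dot hO hL (Pi.single 1 1) (Pi.single 1 1)
    have e3 := conf_dot hO hL (Pi.single 0 1) (Pi.single 1 1)
    simp only [hJ]
    simp [Fin.sum_univ_two] at e1 e2 e3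
    generalize fderiv ℝ f x (Pi.single 0 1) 0 = p at *
    generalize fderiv ℝ f x (Pi.single 0 1) 1 = q at *
    generalize fderiv ℝ f x (Pi.single 1 1) 0 = r at *
    generalize fderiv ℝ f x (Pi.single 1 1) 1 = s at *
    have hc2 : 0 < c ^ 2 := by positivity
    have hdet : (p * s - q * r - c ^ 2) * (p * s - q * r + c ^ 2) = 0 := by
      have : (p * s - q * r) ^ 2 = (p * p + q * q) * (r * r + s * s) - (p * r + q * s) ^ 2 := by ring
      rw [e1, e2, e3] at this
      linear_combination this
    rcases mul_eq_zero.1 hdet with h | h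
    · left
      have hz : (r + q) ^ 2 + (s - p) ^ 2 = 0 := by nlinarith
      refine ⟨by linarith, ?_, ?_⟩ <;> nlinarith [sq_nonneg (r + q), sq_nonneg (s - p)]
    · right
      have hz : (r - q) ^ 2 + (s + p) ^ 2 = 0 := by nlinarith
      refine ⟨by linarith, ?_, ?_⟩ <;> nlinarith [sq_nonneg (r - q), sq_nonneg (s + p)]
  intro x0 hx0
  have hJat := hJc.continuousAt (hΩ.mem_nhds hx0)
  rcases key x0 hx0 with h | h
  · obtain ⟨V, hVs, hV, hxV⟩ := _root_.mem_nhds_iff.1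
      (inter_mem (hΩ.mem_nhds hx0) (hJat.eventually_const_lt h.1))
    have hk : ∀ x ∈ V, _ := fun x hx => (key x (hVs hx).1).resolve_right
      fun h => absurd h.1 (not_lt.2 (le_of_lt (hVs hx).2))
    exact ((smooth_of_cauchy_riemann hV (fun x hx => hf x (hVs hx).1)
      (fun x hx => (hk x hx).2.1) (fun x hx => (hk x hx).2.2)).contDiffAt
        (hV.mem_nhds hxV)).contDiffWithinAt
  · obtain ⟨V, hVs, hV, hxV⟩ := _root_.mem_nhds_iff.1
      (inter_mem (hΩ.mem_nhds hx0) (hJat.eventually_lt_const h.1))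
    have hk : ∀ x ∈ V, _ := fun x hx => (key x (hVs hx).1).resolve_left
      fun h => absurd h.1 (not_lt.2 (le_of_lt (hVs hx).2))
    -- composing with the reflection in the first axis makes the map holomorphic
    let S : Euc 2 →L[ℝ] Euc 2 := ContinuousLinearMap.pi
      ![ContinuousLinearMap.proj 0, - ContinuousLinearMap.proj 1]
    have hS0 : ∀ v, S v 0 = v 0 := fun v => by simp [S]
    have hS1 : ∀ v, S v 1 = - v 1 := fun v => by simp [S]
    have hSS : ∀ v, S (S v) = v := by
      intro v; ext k; fin_cases k
      · change S (S v) 0 = v 0; rw [hS0, hS0]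
      · change S (S v) 1 = v 1; rw [hS1, hS1, neg_neg]
    have hd : ∀ x ∈ V, HasFDerivAt (fun x => S (f x)) (S.comp (fderiv ℝ f x)) x := fun x hx =>
      S.hasFDerivAt.comp x (hf x (hVs hx).1).hasFDerivAt
    have hs : ContDiffOn ℝ (⊤ : ℕ∞) (fun x => S (f x)) V := by
      refine smooth_of_cauchy_riemann hV (fun x hx => (hd x hx).differentiableAt) ?_ ?_
      · intro x hx
        rw [(hd x hx).fderiv]
        simp only [ContinuousLinearMap.comp_apply, hS0, hS1, (hk x hx).2.1, neg_neg]
      · intro x hx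
        rw [(hd x hx).fderiv]
        simp only [ContinuousLinearMap.comp_apply, hS0, hS1, (hk x hx).2.2, neg_neg]
    have h2 : ContDiffAt ℝ (⊤ : ℕ∞) (fun x => S (S (f x))) x0 :=
      S.contDiff.contDiffAt.comp x0 (hs.contDiffAt (hV.mem_nhds hxV))
    simp only [hSS] at h2
    exact h2.contDiffWithinAt

/-! ### Local structure of the attractor -/

/-- Baire category: if `K × K` is covered by countably many smooth hypersurfaces, then `K` lies in
a smooth regular level set near one of its points. -/
lemma exists_local_hypersurface {d : ℕ} {K : Set (Euc d)} (hK : IsCompact K) (hne : K.Nonempty)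
    {Ms : ℕ → Set (Euc d × Euc d)} (hMs : ∀ n, IsCkHypersurface (⊤ : ℕ∞) (Ms n))
    (hsub : K ×ˢ K ⊆ ⋃ n, Ms n) :
    ∃ x0 ∈ K, ∃ (V : Set (Euc d)) (G : Euc d → ℝ), IsOpen V ∧ x0 ∈ V ∧
      ContDiffOn ℝ (⊤ : ℕ∞) G V ∧ (∀ x ∈ V, fderiv ℝ G x ≠ 0) ∧ ∀ x ∈ K ∩ V, G x = 0 := by
  -- countably many closed pieces of the hypersurfaces, each inside one chart
  let good : Set (Euc d × Euc d) → Prop := fun Z => IsClosed Z ∧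
    ∃ (U : Set (Euc d × Euc d)) (F : Euc d × Euc d → ℝ), IsOpen U ∧ ContDiffOn ℝ (⊤ : ℕ∞) F U ∧
      (∀ y ∈ U, fderiv ℝ F y ≠ 0) ∧ Z ⊆ U ∧ ∀ z ∈ Z, F z = 0
  have hpiece : ∀ n, ∀ p ∈ Ms n, ∃ Z, good Z ∧ Z ∈ 𝓝[Ms n] p := by
    intro n p hp
    obtain ⟨U, F, hU, hpU, hF, hdF, hMU⟩ := hMs n p hp
    obtain ⟨r, hr, hrU⟩ := Metric.nhds_basis_closedBall.mem_iff.1 (hU.mem_nhds hpU)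
    refine ⟨closedBall p r ∩ F ⁻¹' {0}, ⟨?_, U, F, hU, hF, hdF, ?_, fun z hz => hz.2⟩, ?_⟩
    · exact (hF.continuousOn.mono hrU).preimage_isClosed_of_isClosed isClosed_closedBall
        isClosed_singleton
    · exact fun z hz => hrU hz.1
    · refine mem_nhdsWithin_iff_exists_mem_nhds_inter.2
        ⟨closedBall p r, closedBall_mem_nhds p hr, ?_⟩
      rintro z ⟨hz, hzM⟩
      have : z ∈ Ms n ∩ U := ⟨hzM, hrU hz⟩
      rw [hMU] at this
      exact ⟨hz, this.2⟩
  choose! Z hZgood hZnhds using hpiece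
  have hcover := fun n => TopologicalSpace.countable_cover_nhdsWithin (hZnhds n)
  choose t htM htc htcov using hcover
  let 𝒮 : Set (Set (Euc d × Euc d)) := ⋃ n, Z n '' t n
  have h𝒮c : 𝒮.Countable := countable_iUnion fun n => (htc n).image _
  have h𝒮g : ∀ S ∈ 𝒮, good S := by
    intro S hS
    obtain ⟨n, p, hp, rfl⟩ := mem_iUnion.1 hS
    exact hZgood n p (htM n hp)
  have h𝒮cov : ∀ z ∈ K ×ˢ K, ∃ S ∈ 𝒮, z ∈ S := by
    intro z hz
    obtain ⟨n, hn⟩ := mem_iUnion.1 (hsub hz)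
    obtain ⟨p, hp, hzp⟩ := mem_iUnion₂.1 (htcov n hn)
    exact ⟨Z n p, mem_iUnion.2 ⟨n, p, hp, rfl⟩, hzp⟩
  have : CompactSpace ↥(K ×ˢ K) := isCompact_iff_compactSpace.1 (hK.prod hK)
  have : Nonempty ↥(K ×ˢ K) := (hne.prod hne).to_subtype
  have : Countable ↥𝒮 := h𝒮c.to_subtype
  obtain ⟨S, z0, hz0⟩ := nonempty_interior_of_iUnion_of_closed
    (X := ↥(K ×ˢ K)) (f := fun S : ↥𝒮 => (Subtype.val ⁻¹' S.1 : Set ↥(K ×ˢ K)))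
    (fun S => (h𝒮g S.1 S.2).1.preimage continuous_subtype_val)
    (eq_univ_of_forall fun z => by
      obtain ⟨S, hS, hz⟩ := h𝒮cov z.1 z.2
      exact mem_iUnion.2 ⟨⟨S, hS⟩, hz⟩)
  obtain ⟨-, U, F, hU, hF, hdF, hSU, hSF⟩ := h𝒮g S.1 S.2
  have hnh : (Subtype.val ⁻¹' S.1 : Set ↥(K ×ˢ K)) ∈ 𝓝 z0 := mem_interior_iff_mem_nhds.1 hz0
  rw [nhds_subtype, mem_comap] at hnh
  obtain ⟨W, hW, hWS⟩ := hnh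
  obtain ⟨⟨x0, y0⟩, hxy⟩ := z0
  obtain ⟨A, hA, hxA, B, hB, hyB, hAB⟩ : ∃ A : Set (Euc d), IsOpen A ∧ x0 ∈ A ∧
      ∃ B : Set (Euc d), IsOpen B ∧ y0 ∈ B ∧ A ×ˢ B ⊆ W := by
    obtain ⟨A, B, hA, hxA, hB, hyB, h⟩ := mem_nhds_prod_iff'.1 hW
    exact ⟨A, hA, hxA, B, hB, hyB, h⟩
  have hin : ∀ x ∈ K ∩ A, ∀ y ∈ K ∩ B, (x, y) ∈ S.1 := fun x hx y hy =>
    hWS (show (⟨(x, y), ⟨hx.1, hy.1⟩⟩ : ↥(K ×ˢ K)) ∈ Subtype.val ⁻¹' W from hAB ⟨hx.2, hy.2⟩)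
  have hzU : (x0, y0) ∈ U := hSU (hin x0 ⟨hxy.1, hxA⟩ y0 ⟨hxy.2, hyB⟩)
  -- restriction of `F` to a horizontal or vertical slice
  have slice : ∀ (ι : Euc d → Euc d × Euc d) (ι' : Euc d →L[ℝ] Euc d × Euc d) (p : Euc d)
      (A : Set (Euc d)), IsOpen A → p ∈ A → p ∈ K → ContDiff ℝ (⊤ : ℕ∞) ι →
      HasFDerivAt ι ι' p → ι p = (x0, y0) → (∀ x ∈ K ∩ A, ι x ∈ S.1) →
      (fderiv ℝ F (x0, y0)).comp ι' ≠ 0 →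
      ∃ x0 ∈ K, ∃ (V : Set (Euc d)) (G : Euc d → ℝ), IsOpen V ∧ x0 ∈ V ∧
      ContDiffOn ℝ (⊤ : ℕ∞) G V ∧ (∀ x ∈ V, fderiv ℝ G x ≠ 0) ∧ ∀ x ∈ K ∩ V, G x = 0 := by
    intro ι ι' p A hA hpA hpK hι hι' hp hS hne
    have hU' : IsOpen (ι ⁻¹' U) := hU.preimage hι.continuous
    have hG : ContDiffOn ℝ (⊤ : ℕ∞) (F ∘ ι) (ι ⁻¹' U) := hF.comp hι.contDiffOn fun x hx => hx
    have hpU : p ∈ ι ⁻¹' U := by rw [mem_preimage, hp]; exact hzU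
    have hder : fderiv ℝ (F ∘ ι) p = (fderiv ℝ F (x0, y0)).comp ι' := by
      have h1 : HasFDerivAt F (fderiv ℝ F (ι p)) (ι p) :=
        ((hF.contDiffAt (hU.mem_nhds hpU)).differentiableAt (by simp)).hasFDerivAt
      rw [hp] at h1
      have := HasFDerivAt.comp p (by rw [hp]; exact h1) hι'
      exact this.fderiv
    have hfc : ContinuousOn (fun x => fderiv ℝ (F ∘ ι) x) (ι ⁻¹' U) :=
      hG.continuousOn_fderiv_of_isOpen hU' (by exact_mod_cast le_top)
    refine ⟨p, hpK, A ∩ (ι ⁻¹' U ∩ (fun x => fderiv ℝ (F ∘ ι) x) ⁻¹' {0}ᶜ), F ∘ ι,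
      hA.inter (hfc.isOpen_inter_preimage hU' isOpen_compl_singleton), ⟨hpA, hpU, ?_⟩,
      hG.mono fun x hx => hx.2.1, fun x hx => hx.2.2, fun x hx => hSF _ (hS x ⟨hx.1, hx.2.1⟩)⟩
    rw [mem_preimage, hder]
    exact hne
  have hdz := hdF (x0, y0) hzU
  by_cases hinl : (fderiv ℝ F (x0, y0)).comp (ContinuousLinearMap.inl ℝ (Euc d) (Euc d)) = 0
  · refine slice (fun y => (x0, y)) (ContinuousLinearMap.inr ℝ (Euc d) (Euc d)) y0 B hB hyB hxy.2
      (contDiff_const.prodMk contDiff_id) (hasFDerivAt_prodMk_right x0 y0) rfl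
      (fun y hy => hin x0 ⟨hxy.1, hxA⟩ y hy) fun hinr => hdz ?_
    refine ContinuousLinearMap.ext fun v => ?_
    have h1 := congrArg (fun T : Euc d →L[ℝ] ℝ => T v.1) hinl
    have h2 := congrArg (fun T : Euc d →L[ℝ] ℝ => T v.2) hinr
    simp only [ContinuousLinearMap.comp_apply, ContinuousLinearMap.inl_apply,
      ContinuousLinearMap.inr_apply, zero_apply] at h1 h2
    have hv : v = (v.1, 0) + (0, v.2) := by simp
    rw [hv, map_add, h1, h2]
    simp
  · exact slice (fun x => (x, y0)) (ContinuousLinearMap.inl ℝ (Euc d) (Euc d)) x0 A hA hxA hxy.1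
      (contDiff_id.prodMk contDiff_const) (hasFDerivAt_prodMk_left x0 y0) rfl
      (fun x hx => hin x hx y0 ⟨hxy.2, hyB⟩) hinl

/-! ### Contraction -/

lemma confScale_eq {d : ℕ} (hd : 1 ≤ d) {f : Euc d → Euc d} {x : Euc d} {c : ℝ} (hc : 0 < c)
    {O : Matrix (Fin d) (Fin d) ℝ} (hO : O ∈ Matrix.orthogonalGroup (Fin d) ℝ)
    (hL : (fderiv ℝ f x : Euc d →ₗ[ℝ] Euc d) = c • O.mulVecLin) : confScale f x = c := by
  have hdet : |O.det| = 1 := by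
    have h := (Matrix.mem_orthogonalGroup_iff (Fin d) ℝ).1 hO
    have h2 : O.det * O.det = 1 := by
      have := congrArg Matrix.det h
      simpa [Matrix.star_eq_conjTranspose] using this
    have h3 : |O.det| * |O.det| = 1 := by rw [abs_mul_abs_self, h2]
    nlinarith [abs_nonneg O.det]
  unfold confScale
  have h1 : LinearMap.det (O.mulVecLin) = O.det := by
    rw [← Matrix.toLin'_apply', LinearMap.det_toLin']
  rw [hL, LinearMap.det_smul, h1, abs_mul, hdet, mul_one, abs_of_pos (pow_pos hc _)]
  rw [Module.finrank_fin_fun]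
  exact Real.pow_rpow_inv_natCast hc.le (by omega)

/-- A conformal map with scaling factor at most `r` on the cube contracts Euclidean distances by
`r`; everything is phrased with squared Euclidean norms `∑ k, u k ^ 2`. -/
lemma euclid_contraction {d : ℕ} (hd : 1 ≤ d) {f : Euc d → Euc d}
    (hf : IsConformalMapOn d f (ball 0 1)) {r : ℝ}
    (hr : ∀ x ∈ ball (0 : Euc d) 1, confScale f x ≤ r) {p q : Euc d} (hp : p ∈ ball (0 : Euc d) 1)
    (hq : q ∈ ball (0 : Euc d) 1) :
    ∑ k, (f p k - f q k) ^ 2 ≤ r ^ 2 * ∑ k, (p k - q k) ^ 2 := by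
  obtain ⟨-, -, hdiff, hconf, -⟩ := hf
  set u : Euc d := f p - f q with hu
  have hseg : ∀ s ∈ Icc (0:ℝ) 1, q + s • (p - q) ∈ ball (0 : Euc d) 1 := fun s hs =>
    (convex_ball (0 : Euc d) 1).add_smul_sub_mem hq hp hs
  set g : ℝ → ℝ := fun s => ∑ k, u k * f (q + s • (p - q)) k with hg
  have hgd : ∀ s ∈ Icc (0:ℝ) 1,
      HasDerivAt g (∑ k, u k * fderiv ℝ f (q + s • (p - q)) (p - q) k) s := by
    intro s hs
    apply HasDerivAt.fun_sum
    intro k _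
    refine HasDerivAt.const_mul (u k) ?_
    have h1 : HasDerivAt (fun s : ℝ => q + s • (p - q)) (p - q) s := by
      simpa using ((hasDerivAt_id s).smul_const (p - q)).const_add q
    have h2 := (hdiff _ (hseg s hs)).hasFDerivAt.comp_hasDerivAt s h1
    exact hasDerivAt_pi.1 h2 k
  obtain ⟨s, hs, hsl⟩ := exists_hasDerivAt_eq_slope g
    (fun s => ∑ k, u k * fderiv ℝ f (q + s • (p - q)) (p - q) k) zero_lt_one
    (fun s hs => (hgd s hs).continuousAt.continuousWithinAt)
    (fun s hs => hgd s (Ioo_subset_Icc_self hs))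
  have hs' := hseg s (Ioo_subset_Icc_self hs)
  have hslope : ∑ k, u k * fderiv ℝ f (q + s • (p - q)) (p - q) k = ∑ k, u k ^ 2 := by
    rw [hsl]
    simp only [hg, one_smul, zero_smul, add_zero, add_sub_cancel, sub_zero, div_one]
    rw [← Finset.sum_sub_distrib]
    refine Finset.sum_congr rfl fun k _ => ?_
    rw [hu, Pi.sub_apply]
    ring
  obtain ⟨c, hc, O, hO, hL⟩ := hconf _ hs'
  have hcr : c ≤ r := by rw [← confScale_eq hd hc hO hL]; exact hr _ hs'
  have hdot := conf_dot hO hL (p - q) (p - q)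
  have hcs := Finset.sum_mul_sq_le_sq_mul_sq Finset.univ u
    (fun k => fderiv ℝ f (q + s • (p - q)) (p - q) k)
  rw [hslope] at hcs
  have hN : ∑ k, (fderiv ℝ f (q + s • (p - q)) (p - q) k) ^ 2 ≤ r ^ 2 * ∑ k, (p k - q k) ^ 2 := by
    have e : ∑ k, (fderiv ℝ f (q + s • (p - q)) (p - q) k) ^ 2 = c ^ 2 * ∑ k, (p k - q k) ^ 2 := by
      simp only [Pi.sub_apply, ← sq] at hdot
      exact hdot
    rw [e]
    exact mul_le_mul_of_nonneg_right (pow_le_pow_left₀ hc.le hcr 2)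
      (Finset.sum_nonneg fun k _ => sq_nonneg _)
  have hu0 : 0 ≤ ∑ k, u k ^ 2 := Finset.sum_nonneg fun k _ => sq_nonneg _
  change ∑ k, u k ^ 2 ≤ _
  rcases hu0.eq_or_lt with h | h
  · rw [← h]
    exact mul_nonneg (sq_nonneg r) (Finset.sum_nonneg fun k _ => sq_nonneg _)
  · have : (∑ k, u k ^ 2) * ∑ k, u k ^ 2 ≤ (∑ k, u k ^ 2) * (r ^ 2 * ∑ k, (p k - q k) ^ 2) := by
      rw [← sq]
      exact hcs.trans (mul_le_mul_of_nonneg_left hN h.le)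
    exact le_of_mul_le_mul_left this h

/-- Some composition of maps of the system carries the attractor into a given neighbourhood of one
of its points. The predicate `P` records a property stable under composition. -/
lemma exists_word {d : ℕ} (hd : 1 ≤ d) (Φ : ConformalIFS d) {K : Set (Euc d)}
    (hK : IsAttractor Φ K) (P : (Euc d → Euc d) → Prop) (hP0 : P id)
    (hPc : ∀ i g, MapsTo g (ball 0 1) (ball 0 1) → P g → P (Φ.funs i ∘ g))
    {x0 : Euc d} (hx0 : x0 ∈ K) {V : Set (Euc d)} (hV : V ∈ 𝓝 x0) :
    ∃ g : Euc d → Euc d, P g ∧ MapsTo g (ball 0 1) (ball 0 1) ∧ InjOn g (ball 0 1) ∧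
      MapsTo g K (K ∩ V) := by
  obtain ⟨-, -, hKb, hKeq⟩ := hK
  have hmaps : ∀ i, MapsTo (Φ.funs i) (ball 0 1) (ball 0 1) := fun i x hx =>
    (Φ.conf i).2.1 (subset_closure (mem_image_of_mem _ hx))
  have hmapsK : ∀ i, MapsTo (Φ.funs i) K K := fun i x hx => by
    rw [hKeq]
    exact mem_iUnion.2 ⟨i, mem_image_of_mem _ hx⟩
  choose r hr1 hr using Φ.contr
  have : Nonempty (Fin Φ.n) := ⟨⟨0, by have := Φ.two_le; omega⟩⟩
  have hr0 : ∀ i, 0 < r i := fun i => by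
    have h0 : (0 : Euc d) ∈ ball (0 : Euc d) 1 := mem_ball_self one_pos
    obtain ⟨c, hc, O, hO, hL⟩ := (Φ.conf i).2.2.2.1 0 h0
    have := hr i 0 h0
    rw [confScale_eq hd hc hO hL] at this
    linarith
  obtain ⟨i0, hi0⟩ := Finite.exists_max r
  set θ : ℝ := r i0 ^ 2 with hθ
  have hθ0 : 0 ≤ θ := sq_nonneg _
  have hθ1 : θ < 1 := pow_lt_one₀ (hr0 i0).le (hr1 i0) two_ne_zero
  have hcontr : ∀ i, ∀ p ∈ ball (0 : Euc d) 1, ∀ q ∈ ball (0 : Euc d) 1,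
      ∑ k, (Φ.funs i p k - Φ.funs i q k) ^ 2 ≤ θ * ∑ k, (p k - q k) ^ 2 := by
    intro i p hp q hq
    refine (euclid_contraction hd (Φ.conf i) (hr i) hp hq).trans ?_
    exact mul_le_mul_of_nonneg_right (pow_le_pow_left₀ (hr0 i).le (hi0 i) 2)
      (Finset.sum_nonneg fun k _ => sq_nonneg _)
  have words : ∀ n : ℕ, ∀ x ∈ K, ∃ g : Euc d → Euc d, P g ∧ MapsTo g (ball 0 1) (ball 0 1) ∧
      InjOn g (ball 0 1) ∧ MapsTo g K K ∧ x ∈ g '' K ∧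
      ∀ p ∈ K, ∀ q ∈ K, ∑ k, (g p k - g q k) ^ 2 ≤ θ ^ n * ∑ k, (p k - q k) ^ 2 := by
    intro n
    induction n with
    | zero =>
      intro x hx
      exact ⟨id, hP0, mapsTo_id _, injOn_id _, mapsTo_id _, ⟨x, hx, rfl⟩, by simp⟩
    | succ n ih =>
      intro x hx
      rw [hKeq] at hx
      obtain ⟨i, x', hx', rfl⟩ := mem_iUnion.1 hx
      obtain ⟨g, hg1, hg2, hg3, hg4, ⟨y, hy, rfl⟩, hg6⟩ := ih x' hx'
      refine ⟨Φ.funs i ∘ g, hPc i g hg2 hg1, (hmaps i).comp hg2, (Φ.conf i).1.comp hg3 hg2,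
        (hmapsK i).comp hg4, ⟨y, hy, rfl⟩, fun p hp q hq => ?_⟩
      refine (hcontr i (g p) (hg2 (hKb hp)) (g q) (hg2 (hKb hq))).trans ?_
      rw [pow_succ', mul_assoc]
      exact mul_le_mul_of_nonneg_left (hg6 p hp q hq) hθ0
  obtain ⟨ε, hε, hεV⟩ := Metric.mem_nhds_iff.1 hV
  have hdiam : ∀ p ∈ K, ∀ q ∈ K, ∑ k, (p k - q k) ^ 2 ≤ d * 4 := by
    intro p hp q hq
    have h1 : ∀ k, (p k - q k) ^ 2 ≤ 4 := by
      intro k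
      have hp1 := (norm_le_pi_norm p k).trans_lt (mem_ball_zero_iff.1 (hKb hp))
      have hq1 := (norm_le_pi_norm q k).trans_lt (mem_ball_zero_iff.1 (hKb hq))
      rw [Real.norm_eq_abs, abs_lt] at hp1 hq1
      nlinarith
    calc ∑ k, (p k - q k) ^ 2 ≤ ∑ _k : Fin d, (4 : ℝ) := Finset.sum_le_sum fun k _ => h1 k
      _ = d * 4 := by simp
  obtain ⟨n, hn⟩ : ∃ n : ℕ, θ ^ n * (d * 4) < ε ^ 2 := by
    have := (tendsto_pow_atTop_nhds_zero_of_lt_one hθ0 hθ1).mul_const ((d : ℝ) * 4)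
    rw [zero_mul] at this
    exact (this.eventually_lt_const (by positivity)).exists
  obtain ⟨g, hg1, hg2, hg3, hg4, ⟨y, hy, hyx⟩, hg6⟩ := words n x0 hx0
  refine ⟨g, hg1, hg2, hg3, fun p hp => ⟨hg4 hp, hεV ?_⟩⟩
  rw [mem_ball, dist_eq_norm, pi_norm_lt_iff hε]
  intro k
  have h1 : (g p k - g y k) ^ 2 < ε ^ 2 :=
    calc (g p k - g y k) ^ 2 ≤ ∑ k, (g p k - g y k) ^ 2 :=
          Finset.single_le_sum (f := fun k => (g p k - g y k) ^ 2) (fun k _ => sq_nonneg _)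
            (Finset.mem_univ k)
      _ ≤ θ ^ n * ∑ k, (p k - y k) ^ 2 := hg6 p hp y hy
      _ ≤ θ ^ n * (d * 4) := mul_le_mul_of_nonneg_left (hdiam p hp y hy) (pow_nonneg hθ0 n)
      _ < ε ^ 2 := hn
  rw [hyx] at h1
  rw [Pi.sub_apply, Real.norm_eq_abs]
  exact abs_lt_of_sq_lt_sq h1 hε.le

/-! ### Globalization -/

lemma conf_smooth {d : ℕ} (hd : 2 ≤ d) {f : Euc d → Euc d}
    (hf : IsConformalMapOn d f (ball 0 1)) : ContDiffOn ℝ (⊤ : ℕ∞) f (ball 0 1) := by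
  obtain ⟨-, -, hdiff, hconf, C, α, hα, hH⟩ := hf
  have hcont := hH.continuousOn hα
  rcases hd.eq_or_lt with rfl | h
  · exact conf_smooth_two isOpen_ball hdiff hconf hcont
  · exact conf_smooth_of_three_le h isOpen_ball hdiff hconf hcont

theorem selfconformal_product_in_hypersurfaces_implies_hypersurface
    {d : ℕ} (hd : 1 ≤ d) (Φ : ConformalIFS d) (K : Set (Euc d)) (hK : IsAttractor Φ K)
    (Ms : ℕ → Set (Euc d × Euc d)) (hMs : ∀ n, IsCkHypersurface (⊤ : ℕ∞) (Ms n))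
    (hsub : K ×ˢ K ⊆ ⋃ n, Ms n) :
    ∃ M : Set (Euc d), IsCkHypersurface (⊤ : ℕ∞) M ∧ K ⊆ M := by
  have hKb := hK.2.2.1
  obtain ⟨x0, hx0, V, G, hV, hxV, hG, hdG, hKG⟩ :=
    exists_local_hypersurface hK.2.1 hK.1 hMs hsub
  rcases hd.eq_or_lt with h1 | h2
  -- on the line, `x0` is isolated in `K`, so a composition maps `K` to `x0`; hence `K` is a point
  · subst h1
    have hGd : HasFDerivAt G (fderiv ℝ G x0) x0 :=
      ((hG.contDiffAt (hV.mem_nhds hxV)).differentiableAt (by simp)).hasFDerivAt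
    have hv : ∀ v : Euc 1, v = v 0 • (fun _ => (1:ℝ)) := by
      intro v; ext k; rw [Subsingleton.elim k 0]; simp
    set m : ℝ := fderiv ℝ G x0 (fun _ => (1:ℝ)) with hm
    have hGv : ∀ v, fderiv ℝ G x0 v = v 0 * m := by
      intro v
      conv_lhs => rw [hv v]
      rw [map_smul, smul_eq_mul]
    have hm0 : m ≠ 0 := by
      intro h0
      apply hdG x0 hxV
      ext1 v
      rw [hGv, h0, mul_zero]; rfl
    have hiso := hGd.eventually_ne (c := 0) ⟨‖m‖₊⁻¹, (fderiv ℝ G x0).antilipschitz_of_bound fun v => by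
      rw [hGv, norm_mul, NNReal.coe_inv, coe_nnnorm, mul_comm, mul_assoc,
        mul_inv_cancel₀ (norm_ne_zero_iff.2 hm0), mul_one]
      refine (pi_norm_le_iff_of_nonneg (norm_nonneg _)).2 fun k => ?_
      rw [Subsingleton.elim k 0]⟩
    rw [eventually_nhdsWithin_iff] at hiso
    obtain ⟨g, -, -, hginj, hgV⟩ := exists_word le_rfl Φ hK (fun _ => True) trivial
      (fun _ _ _ _ => trivial) hx0 (inter_mem (hV.mem_nhds hxV) hiso)
    have hgx : ∀ p ∈ K, g p = x0 := by
      intro p hp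
      by_contra hne
      have := hgV hp
      exact this.2.2 hne (hKG _ ⟨this.1, this.2.1⟩)
    refine ⟨{x | x 0 = x0 0}, ?_, ?_⟩
    · intro x _
      refine ⟨univ, fun y => y 0 - x0 0, isOpen_univ, mem_univ _, by fun_prop, ?_, ?_⟩
      · intro y _ h0
        have hh : HasFDerivAt (fun y : Euc 1 => y 0 - x0 0)
            (ContinuousLinearMap.proj 0 : Euc 1 →L[ℝ] ℝ) y :=
          (hasFDerivAt_apply 0 y).sub_const _
        rw [hh.fderiv] at h0
        have := congrArg (fun T : Euc 1 →L[ℝ] ℝ => T (fun _ => 1)) h0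
        simp at this
      · ext y; simp [sub_eq_zero]
    · intro p hp
      have : p = x0 := hginj (hKb hp) (hKb hx0) (by rw [hgx p hp, hgx x0 hx0])
      rw [this]; rfl
  · have hdim : 2 ≤ d := h2
    obtain ⟨g, ⟨hgs, hgd⟩, hgb, -, hgV⟩ := exists_word hd Φ hK
      (fun g => ContDiffOn ℝ (⊤ : ℕ∞) g (ball 0 1) ∧
        ∀ x ∈ ball (0 : Euc d) 1, Function.Surjective (fderiv ℝ g x))
      ⟨contDiff_id.contDiffOn, fun x _ => by rw [fderiv_id]; exact Function.surjective_id⟩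
      (fun i g hg hPg => by
        have hs := conf_smooth hdim (Φ.conf i)
        refine ⟨hs.comp hPg.1 hg, fun x hx => ?_⟩
        have hgx := (hPg.1.contDiffAt (isOpen_ball.mem_nhds hx)).differentiableAt (by simp)
        rw [fderiv_comp x ((Φ.conf i).2.2.1 _ (hg hx)) hgx]
        have hc : ConfLin (fderiv ℝ (Φ.funs i) (g x)) := (Φ.conf i).2.2.2.1 _ (hg hx)
        have hsurj : Function.Surjective (fderiv ℝ (Φ.funs i) (g x)) := by
          rw [← hc.coe_equiv]
          exact hc.equiv.surjective
        exact hsurj.comp (hPg.2 x hx))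
      hx0 (hV.mem_nhds hxV)
    set U : Set (Euc d) := ball 0 1 ∩ g ⁻¹' V with hU
    have hUo : IsOpen U := hgs.continuousOn.isOpen_inter_preimage isOpen_ball hV
    have hFs : ContDiffOn ℝ (⊤ : ℕ∞) (G ∘ g) U :=
      hG.comp (hgs.mono inter_subset_left) fun x hx => hx.2
    refine ⟨{x ∈ U | (G ∘ g) x = 0}, ?_, ?_⟩
    · rintro x ⟨hxU, -⟩
      refine ⟨U, G ∘ g, hUo, hxU, hFs, ?_, ?_⟩
      · intro y hy h0
        have hgy := (hgs.contDiffAt (isOpen_ball.mem_nhds hy.1)).differentiableAt (by simp)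
        have hGy := (hG.contDiffAt (hV.mem_nhds hy.2)).differentiableAt (by simp)
        rw [fderiv_comp y hGy hgy] at h0
        apply hdG _ hy.2
        ext1 v
        obtain ⟨u, rfl⟩ := hgd y hy.1 v
        exact congrArg (fun T : Euc d →L[ℝ] ℝ => T u) h0
      · ext y
        constructor
        · exact fun h => h.1
        · exact fun h => ⟨h, h.1⟩
    · intro p hp
      exact ⟨⟨hKb hp, (hgV hp).2⟩, hKG _ (hgV hp)⟩
end
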